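/- arXiv:1601.05906 — 2 statements merged into one kernel-verified Lean document; each statement's English description precedes it below -/
import Mathlib

section
/- Let m ≥ 2. In the algebra ℂ[sl_{2m}] of polynomial functions on sl_{2m}(ℂ), let I be the ideal generated by the entries of the matrix-valued polynomial map X ↦ X² − (tr(X²)/2m)·I_{2m} (equivalently, by all functions X ↦ tr(A·X²) with A a traceless 2m×2m matrix). Then I is a prime ideal; consequently I equals the full ideal of polynomial functions vanishing on the Zariski closure of the cone {t·g·D·g⁻¹ : t ∈ ℂ∖{0}, g ∈ GL_{2m}(ℂ)}, where D is the diagonal matrix diag(1,…,1,−1,…,−1) with m ones and m minus-ones. -/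
open Matrix

noncomputable section

abbrev Mat (n : ℕ) := Matrix (Fin n) (Fin n) ℂ

abbrev GLn (n : ℕ) := Matrix.GeneralLinearGroup (Fin n) ℂ

/-- The set of traceless `n×n` complex matrices, i.e. `sl_n(ℂ)`. -/
def slS (n : ℕ) : Set (Mat n) := {X | X.trace = 0}

/-- The algebra `ℂ[sl_n]` of polynomial functions on `sl_n(ℂ)`: the subalgebra of all
functions `sl_n → ℂ` generated by the matrix-entry coordinate functions. -/
def polyFns (n : ℕ) : Subalgebra ℂ (↥(slS n) → ℂ) :=
  Algebra.adjoin ℂ {p | ∃ i j : Fin n, p = fun X => X.1 i j}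

/-- A subset of `sl_n(ℂ)` is Zariski closed if it is the common zero locus of a family of
polynomial functions on `sl_n(ℂ)`. -/
def slZclosed (n : ℕ) (C : Set ↥(slS n)) : Prop :=
  ∃ T : Set (↥(slS n) → ℂ), T ⊆ (polyFns n : Set (↥(slS n) → ℂ)) ∧
    C = {X | ∀ p ∈ T, p X = 0}

/-- The Zariski closure of a subset of `sl_n(ℂ)`. -/
def slZclosure (n : ℕ) (C : Set ↥(slS n)) : Set ↥(slS n) :=
  ⋂₀ {D | slZclosed n D ∧ C ⊆ D}

/-!
Let `J` be the ideal of the cone in `K[Mat_n]`, and `τ = tr(X²) / n`. Any two points of the cone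
are joined by a polynomial curve that lies generically in the cone, so `J` is prime. The cone
degenerates to `N = {Y | Y² = 0}`: for `Y ∈ N` there is an involution `E` of trace zero with `EY =
Y = -YE`, and then `Y + sE` lies in the cone for `s ≠ 0`. Hence a polynomial in `J` vanishes on
`N`. If the ideal of `N` is generated by the trace and the entries of `X²`, such a polynomial is
`τH` modulo the generators of the theorem, and `H ∈ J` because `τ` has no zero on the cone; graded
Nakayama finishes.

For the ideal of `N`, use the Fischer inner product, for which `X p` is adjoint to `∂ / ∂ X p`.
The polynomials of degree at most `d` that vanish on `N` and are orthogonal to `(tr X, X²)` are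
stable under infinitesimal conjugation, so if there is a nonzero one, there is a highest weight
vector `F`. With row and column polarizations `R_{ab}` and `C_{ab}`, the polynomial `∑ R_{ab}
C_{ab} F` lies in `(tr X, X²)`, so `∑ ⟪F, R_{ab} C_{ab} F⟫ = 0`. For `a ≠ b` the highest weight
property makes the summand a squared norm, and for `a = b` it is a nonnegative combination of the
`|F_M|²`. So every summand vanishes, no index occurs both as a row and as a column in a monomial
of `F`, and evaluating `F` at the square-zero matrices supported on the entries of such a monomial
gives `F = 0`.
-/

open MvPolynomial
open scoped Nat ComplexConjugate InnerProductSpace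

section Polarization

variable {ι K : Type*} [CommRing K] [Fintype ι]

/-- The polarization operator `∑ₖ x_{ak} ∂/∂x_{bk}`, which substitutes row `a` for row `b`. -/
def rowPolarization (a b : ι) : Derivation K (MvPolynomial (ι × ι) K) (MvPolynomial (ι × ι) K) :=
  ∑ k, (X (a, k) : MvPolynomial (ι × ι) K) • pderiv (b, k)

/-- The polarization operator `∑ₖ x_{ka} ∂/∂x_{kb}`, which substitutes column `a` for column `b`. -/
def colPolarization (a b : ι) : Derivation K (MvPolynomial (ι × ι) K) (MvPolynomial (ι × ι) K) :=
  ∑ k, (X (k, a) : MvPolynomial (ι × ι) K) • pderiv (k, b)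

/-- The infinitesimal conjugation `X ↦ E_{ba} X - X E_{ba}` by an elementary matrix, acting as a
derivation on polynomials in the matrix entries. -/
def adjDerivation (a b : ι) : Derivation K (MvPolynomial (ι × ι) K) (MvPolynomial (ι × ι) K) :=
  rowPolarization a b - colPolarization b a

lemma rowPolarization_apply (a b : ι) (F : MvPolynomial (ι × ι) K) :
    rowPolarization a b F = ∑ k, X (a, k) * pderiv (b, k) F := by
  simp only [rowPolarization, ← Derivation.coeFnAddMonoidHom_apply, map_sum, Finset.sum_apply]
  rfl

lemma colPolarization_apply (a b : ι) (F : MvPolynomial (ι × ι) K) :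
    colPolarization a b F = ∑ k, X (k, a) * pderiv (k, b) F := by
  simp only [colPolarization, ← Derivation.coeFnAddMonoidHom_apply, map_sum, Finset.sum_apply]
  rfl

lemma coeff_X_mul_pderiv_self {σ : Type*} (p : σ) (F : MvPolynomial σ K) (M : σ →₀ ℕ) :
    coeff M (X p * pderiv p F) = M p * coeff M F := by
  classical
  rw [coeff_X_mul']
  split_ifs with hp
  · have hM : M - .single p 1 + .single p 1 = M :=
      tsub_add_cancel_of_le <| Finsupp.single_le_iff.mpr <|
        Nat.one_le_iff_ne_zero.mpr (Finsupp.mem_support_iff.mp hp)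
    have hp : (M - .single p 1) p + 1 = M p := by simpa using DFunLike.congr_fun hM p
    rw [coeff_pderiv, hM, mul_comm, ← hp, Nat.cast_add_one]
  · simp [Finsupp.notMem_support_iff.mp hp]

lemma coeff_rowPolarization_self (a : ι) (F : MvPolynomial (ι × ι) K) (M : ι × ι →₀ ℕ) :
    coeff M (rowPolarization a a F) = (∑ k, M (a, k) : ℕ) * coeff M F := by
  simp only [rowPolarization_apply, coeff_sum, coeff_X_mul_pderiv_self, Nat.cast_sum,
    Finset.sum_mul]

lemma coeff_colPolarization_self (a : ι) (F : MvPolynomial (ι × ι) K) (M : ι × ι →₀ ℕ) :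
    coeff M (colPolarization a a F) = (∑ k, M (k, a) : ℕ) * coeff M F := by
  simp only [colPolarization_apply, coeff_sum, coeff_X_mul_pderiv_self, Nat.cast_sum,
    Finset.sum_mul]

variable (ι K) in
/-- The ideal of `K[Mat_n]` generated by the trace and by the entries of `X²`. -/
def squareZeroIdeal : Ideal (MvPolynomial (ι × ι) K) :=
  Ideal.span (insert (trace (mvPolynomialX ι ι K))
    (Set.range fun p : ι × ι => (mvPolynomialX ι ι K * mvPolynomialX ι ι K) p.1 p.2))

lemma trace_mem_squareZeroIdeal : trace (mvPolynomialX ι ι K) ∈ squareZeroIdeal ι K :=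
  Ideal.subset_span (Set.mem_insert _ _)

lemma mul_self_apply_mem_squareZeroIdeal (i j : ι) :
    (mvPolynomialX ι ι K * mvPolynomialX ι ι K) i j ∈ squareZeroIdeal ι K :=
  Ideal.subset_span (Set.mem_insert_of_mem _ ⟨(i, j), rfl⟩)

lemma rowPolarization_X [DecidableEq ι] (a b i j : ι) :
    rowPolarization (K := K) a b (X (i, j)) = if i = b then X (a, j) else 0 := by
  simp [rowPolarization_apply, pderiv_X, Pi.single_apply, Prod.ext_iff, ite_and]

lemma colPolarization_X [DecidableEq ι] (a b i j : ι) :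
    colPolarization (K := K) a b (X (i, j)) = if j = b then X (i, a) else 0 := by
  simp [colPolarization_apply, pderiv_X, Pi.single_apply, Prod.ext_iff, ite_and]

lemma rowPolarization_colPolarization_comm (a b c d : ι) (F : MvPolynomial (ι × ι) K) :
    rowPolarization a b (colPolarization c d F) = colPolarization c d (rowPolarization a b F) := by
  classical
  have h : ⁅rowPolarization (K := K) a b, colPolarization c d⁆ = 0 :=
    MvPolynomial.derivation_ext fun ⟨i, j⟩ => by
      rw [Derivation.commutator_apply]
      simp only [rowPolarization_X, colPolarization_X, Derivation.coe_zero, Pi.zero_apply]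
      split_ifs <;> simp [rowPolarization_X, colPolarization_X, *]
  rw [← sub_eq_zero, ← Derivation.commutator_apply, h, Derivation.zero_apply]

lemma derivation_map_mul {R A n : Type*} [Fintype n] [CommRing R] [CommRing A] [Algebra R A]
    (D : Derivation R A A) (M N : Matrix n n A) :
    (M * N).map D = M.map D * N + M * N.map D := by
  ext i j
  simp [mul_apply, Finset.sum_add_distrib, mul_comm, add_comm]

lemma adjDerivation_genericMatrix [DecidableEq ι] (a b : ι) :
    (mvPolynomialX ι ι K).map (adjDerivation a b) =
      single b a 1 * mvPolynomialX ι ι K - mvPolynomialX ι ι K * single b a 1 := by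
  ext1 i j
  simp [adjDerivation, rowPolarization_X, colPolarization_X, Matrix.mul_apply,
    Matrix.single_apply, ite_and, eq_comm]

lemma derivation_mem_span {R A : Type*} [CommRing R] [CommRing A] [Algebra R A]
    (D : Derivation R A A) {s : Set A} (hs : ∀ x ∈ s, D x ∈ Ideal.span s) {x : A}
    (hx : x ∈ Ideal.span s) : D x ∈ Ideal.span s := by
  induction hx using Submodule.span_induction with
  | mem x hx => exact hs x hx
  | zero => simp
  | add x y _ _ hx hy => simpa using add_mem hx hy
  | smul a x hx ih =>
    simpa using add_mem (Ideal.mul_mem_left _ a ih) (Ideal.mul_mem_right (D a) _ hx)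

lemma adjDerivation_mem_squareZeroIdeal (a b : ι) {F : MvPolynomial (ι × ι) K}
    (hF : F ∈ squareZeroIdeal ι K) : adjDerivation a b F ∈ squareZeroIdeal ι K := by
  classical
  refine derivation_mem_span _ ?_ hF
  change ∀ x ∈ _, _ ∈ squareZeroIdeal ι K
  rw [Set.forall_mem_insert, Set.forall_mem_range]
  set X₀ := mvPolynomialX ι ι K
  constructor
  · have : adjDerivation a b (trace X₀) = trace (X₀.map (adjDerivation a b)) := by
      simp [trace]
    rw [this, adjDerivation_genericMatrix, trace_sub, trace_mul_comm, sub_self]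
    exact zero_mem _
  · rintro ⟨i, j⟩
    have : (X₀ * X₀).map (adjDerivation a b) =
        single b a 1 * (X₀ * X₀) - (X₀ * X₀) * single b a 1 := by
      rw [derivation_map_mul, adjDerivation_genericMatrix]
      noncomm_ring
    change ((X₀ * X₀).map (adjDerivation a b)) i j ∈ _
    rw [this, Matrix.sub_apply, mul_apply, mul_apply]
    exact sub_mem
      (sum_mem fun k _ => Ideal.mul_mem_left _ _ (mul_self_apply_mem_squareZeroIdeal k j))
      (sum_mem fun k _ => Ideal.mul_mem_right _ _ (mul_self_apply_mem_squareZeroIdeal i k))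

lemma rowPolarization_colPolarization_self (a b : ι) (F : MvPolynomial (ι × ι) K) :
    rowPolarization a b (colPolarization a b F) = X (a, a) * pderiv (b, b) F +
      ∑ k, ∑ l, X (l, a) * X (a, k) * pderiv (b, k) (pderiv (l, b) F) := by
  classical
  simp only [colPolarization_apply, map_sum, Derivation.leibniz, rowPolarization_X, smul_eq_mul,
    mul_ite, mul_zero, Finset.sum_add_distrib, Finset.sum_ite_eq', Finset.mem_univ, if_true]
  rw [add_comm, mul_comm, Finset.sum_comm]
  simp only [rowPolarization_apply, Finset.mul_sum, mul_assoc]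

lemma sum_rowPolarization_colPolarization (F : MvPolynomial (ι × ι) K) :
    ∑ a, ∑ b, rowPolarization a b (colPolarization a b F) =
      ∑ b, (trace (mvPolynomialX ι ι K) * pderiv (b, b) F + ∑ k, ∑ l,
        (mvPolynomialX ι ι K * mvPolynomialX ι ι K) l k * pderiv (b, k) (pderiv (l, b) F)) := by
  simp only [rowPolarization_colPolarization_self]
  rw [Finset.sum_comm]
  refine Finset.sum_congr rfl fun b _ => ?_
  rw [Finset.sum_add_distrib, ← Finset.sum_mul, Finset.sum_comm]
  congr 1
  refine Finset.sum_congr rfl fun k _ => ?_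
  rw [Finset.sum_comm]
  simp only [mul_apply, mvPolynomialX_apply, Finset.sum_mul]

lemma sum_rowPolarization_colPolarization_mem (F : MvPolynomial (ι × ι) K) :
    ∑ a, ∑ b, rowPolarization a b (colPolarization a b F) ∈ squareZeroIdeal ι K := by
  rw [sum_rowPolarization_colPolarization]
  exact sum_mem fun b _ => add_mem (Ideal.mul_mem_right _ _ trace_mem_squareZeroIdeal) <|
    sum_mem fun k _ => sum_mem fun l _ =>
      Ideal.mul_mem_right _ _ (mul_self_apply_mem_squareZeroIdeal l k)

end Polarization

section MatrixEval

variable {ι K R S : Type*} [CommRing K] [CommRing R] [CommRing S] [Algebra K R] [Algebra K S]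

/-- Evaluation of a polynomial in the matrix entries at a matrix over a `K`-algebra. -/
def matrixEval (A : Matrix ι ι R) : MvPolynomial (ι × ι) K →ₐ[K] R :=
  aeval fun p => A p.1 p.2

@[simp]
lemma matrixEval_X (A : Matrix ι ι R) (p : ι × ι) : matrixEval (K := K) A (X p) = A p.1 p.2 :=
  aeval_X _ p

lemma map_matrixEval (f : R →ₐ[K] S) (A : Matrix ι ι R) (F : MvPolynomial (ι × ι) K) :
    f (matrixEval A F) = matrixEval (A.map f) F := by
  simp only [matrixEval, ← AlgHom.comp_apply, comp_aeval]
  rfl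

lemma genericMatrix_map_matrixEval (A : Matrix ι ι R) :
    (mvPolynomialX ι ι K).map (matrixEval A) = A := by
  ext i j
  simp

variable [Fintype ι]

lemma matrixEval_trace (A : Matrix ι ι R) :
    matrixEval A (trace (mvPolynomialX ι ι K)) = trace A := by
  simp [trace]

lemma matrixEval_mul_self (A : Matrix ι ι R) (i j : ι) :
    matrixEval A ((mvPolynomialX ι ι K * mvPolynomialX ι ι K) i j) = (A * A) i j := by
  simp [mul_apply]

end MatrixEval

section VanishingIdeal

open Polynomial in
lemma eval_matrixEval {ι K : Type*} [CommRing K] (γ : Matrix ι ι K[X]) (s : K)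
    (F : MvPolynomial (ι × ι) K) : (matrixEval γ F).eval s = matrixEval (γ.map (eval s)) F :=
  map_matrixEval (Polynomial.aeval s) γ F

open Polynomial in
lemma matrixEval_eq_zero_of_eval {ι K : Type*} [CommRing K] [IsDomain K] [Infinite K]
    (γ : Matrix ι ι K[X]) {q : K[X]} (hq : q ≠ 0) {F : MvPolynomial (ι × ι) K}
    (h : ∀ s, q.eval s ≠ 0 → matrixEval (γ.map (eval s)) F = 0) : matrixEval γ F = 0 := by
  refine (mul_eq_zero.mp (Polynomial.funext fun s => ?_)).resolve_left hq
  rw [Polynomial.eval_mul, Polynomial.eval_zero, mul_eq_zero, or_iff_not_imp_left]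
  exact fun hs => (eval_matrixEval γ s F).trans (h s hs)

variable {ι K : Type*} [Field K]

/-- The ideal of polynomials in the matrix entries that vanish on a set of matrices. -/
def matrixVanishingIdeal (S : Set (Matrix ι ι K)) : Ideal (MvPolynomial (ι × ι) K) :=
  vanishingIdeal K ((fun A p => A p.1 p.2) '' S)

lemma mem_matrixVanishingIdeal {S : Set (Matrix ι ι K)} {F : MvPolynomial (ι × ι) K} :
    F ∈ matrixVanishingIdeal S ↔ ∀ A ∈ S, matrixEval A F = 0 :=
  Set.forall_mem_image

end VanishingIdeal

section Weights

variable {σ K : Type*} [CommRing K]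

lemma X_mul_pderiv_mem_restrictSupport {s t : Set (σ →₀ ℕ)} {p q : σ}
    (hst : ∀ M, M + .single q 1 ∈ s → M + .single p 1 ∈ t) {F : MvPolynomial σ K}
    (hF : F ∈ restrictSupport K s) : X p * pderiv q F ∈ restrictSupport K t := by
  classical
  rw [mem_restrictSupport_iff] at hF ⊢
  intro M hM
  rw [support_X_mul, Finset.mem_coe, Finset.mem_map] at hM
  obtain ⟨M, hM, rfl⟩ := hM
  rw [mem_support_iff, coeff_pderiv] at hM
  rw [addLeftEmbedding_apply, add_comm]
  exact hst M (hF (mem_support_iff.mpr (left_ne_zero_of_mul hM)))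

variable (K) in
/-- The span of the monomials of `w`-weight at least `k`. -/
def weightFiltration (w : σ → ℕ) (k : ℕ) : Submodule K (MvPolynomial σ K) :=
  restrictSupport K {M | k ≤ Finsupp.weight w M}

lemma X_mul_pderiv_mem_weightFiltration {w : σ → ℕ} {p q : σ} (hpq : w q < w p) {k : ℕ}
    {F : MvPolynomial σ K} (hF : F ∈ weightFiltration K w k) :
    X p * pderiv q F ∈ weightFiltration K w (k + 1) := by
  refine X_mul_pderiv_mem_restrictSupport (fun M (hM : k ≤ _) => ?_) hF
  simp only [map_add, Finsupp.weight_single, one_smul] at hM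
  simp only [Set.mem_ofPred_eq, map_add, Finsupp.weight_single, one_smul]
  omega

lemma X_mul_pderiv_mem_restrictTotalDegree (p q : σ) {d : ℕ} {F : MvPolynomial σ K}
    (hF : F ∈ restrictTotalDegree σ K d) : X p * pderiv q F ∈ restrictTotalDegree σ K d := by
  refine X_mul_pderiv_mem_restrictSupport (fun M (hM : Finsupp.degree _ ≤ d) => ?_) hF
  change Finsupp.degree _ ≤ d
  simpa using hM

lemma restrictTotalDegree_inf_weightFiltration {w : σ → ℕ} {b : ℕ} (hw : ∀ p, w p ≤ b) (d : ℕ) :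
    restrictTotalDegree σ K d ⊓ weightFiltration K w (d * b + 1) = ⊥ := by
  refine (Submodule.eq_bot_iff _).mpr fun F ⟨hd, hF⟩ => ?_
  refine support_eq_empty.mp (Finset.eq_empty_of_forall_notMem fun M hM => ?_)
  have hdeg : M.degree ≤ d := hd hM
  have hwt : d * b + 1 ≤ Finsupp.weight w M := hF hM
  have : Finsupp.weight w M ≤ M.degree * b := by
    rw [Finsupp.weight_apply, Finsupp.degree_apply, Finset.sum_mul]
    exact Finset.sum_le_sum fun p _ => Nat.mul_le_mul_left _ (hw p)
  exact absurd (hwt.trans (this.trans (Nat.mul_le_mul_right b hdeg))) (by omega)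

end Weights

-- The vector is taken from the last nonzero step of the filtration that `W` induces on `V`.
lemma exists_ne_zero_forall_map_eq_zero {α K E : Type*} [Semiring K] [AddCommMonoid E]
    [Module K E] {T : α → E →ₗ[K] E} {V : Submodule K E} (hV : V ≠ ⊥)
    (hTV : ∀ i, ∀ v ∈ V, T i v ∈ V)
    {W : ℕ → Submodule K E} (hW₀ : V ≤ W 0) (hTW : ∀ i k, ∀ v ∈ W k, T i v ∈ W (k + 1))
    {N : ℕ} (hN : V ⊓ W N = ⊥) : ∃ v ∈ V, v ≠ 0 ∧ ∀ i, T i v = 0 := by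
  classical
  have hex : ∃ k, V ⊓ W k = ⊥ := ⟨N, hN⟩
  obtain ⟨k, hk⟩ : ∃ k, Nat.find hex = k + 1 :=
    Nat.exists_eq_succ_of_ne_zero fun h => hV <| by
      simpa [h, inf_eq_left.mpr hW₀] using Nat.find_spec hex
  obtain ⟨v, hv, hv₀⟩ := Submodule.exists_mem_ne_zero_of_ne_bot
    (Nat.find_min hex (m := k) (by omega))
  refine ⟨v, hv.1, hv₀, fun i => ?_⟩
  rw [← Submodule.mem_bot K, ← Nat.find_spec hex, hk]
  exact ⟨hTV i v hv.1, hTW i k v hv.2⟩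

section AdjWeights

variable {ι K : Type*} [CommRing K] [Fintype ι]

lemma rowPolarization_mem {W : Submodule K (MvPolynomial (ι × ι) K)} {a b : ι}
    {F : MvPolynomial (ι × ι) K} (h : ∀ k, X (a, k) * pderiv (b, k) F ∈ W) :
    rowPolarization a b F ∈ W :=
  rowPolarization_apply a b F ▸ sum_mem fun k _ => h k

lemma colPolarization_mem {W : Submodule K (MvPolynomial (ι × ι) K)} {a b : ι}
    {F : MvPolynomial (ι × ι) K} (h : ∀ k, X (k, a) * pderiv (k, b) F ∈ W) :
    colPolarization a b F ∈ W :=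
  colPolarization_apply a b F ▸ sum_mem fun k _ => h k

lemma rowPolarization_mem_restrictTotalDegree (a b : ι) {d : ℕ} {F : MvPolynomial (ι × ι) K}
    (hF : F ∈ restrictTotalDegree (ι × ι) K d) :
    rowPolarization a b F ∈ restrictTotalDegree (ι × ι) K d :=
  rowPolarization_mem fun _ => X_mul_pderiv_mem_restrictTotalDegree _ _ hF

lemma colPolarization_mem_restrictTotalDegree (a b : ι) {d : ℕ} {F : MvPolynomial (ι × ι) K}
    (hF : F ∈ restrictTotalDegree (ι × ι) K d) :
    colPolarization a b F ∈ restrictTotalDegree (ι × ι) K d :=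
  colPolarization_mem fun _ => X_mul_pderiv_mem_restrictTotalDegree _ _ hF

lemma adjDerivation_mem_restrictTotalDegree (a b : ι) {d : ℕ} {F : MvPolynomial (ι × ι) K}
    (hF : F ∈ restrictTotalDegree (ι × ι) K d) :
    adjDerivation a b F ∈ restrictTotalDegree (ι × ι) K d :=
  sub_mem (rowPolarization_mem_restrictTotalDegree a b hF)
    (colPolarization_mem_restrictTotalDegree b a hF)

/-- The weight `e j - e i` of the entry `x_{ij}` under a torus acting by conjugation, for a
numbering `e` of the indices, shifted by `n` to be a natural number. -/
def entryWeight (n : ℕ) (e : ι → Fin n) (p : ι × ι) : ℕ := n - e p.1 + e p.2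

lemma adjDerivation_mem_weightFiltration {n : ℕ} {e : ι → Fin n} {a b : ι} (hab : e a < e b)
    {k : ℕ} {F : MvPolynomial (ι × ι) K} (hF : F ∈ weightFiltration K (entryWeight n e) k) :
    adjDerivation a b F ∈ weightFiltration K (entryWeight n e) (k + 1) :=
  sub_mem
    (rowPolarization_mem fun _ =>
      X_mul_pderiv_mem_weightFiltration (by simp only [entryWeight]; omega) hF)
    (colPolarization_mem fun _ =>
      X_mul_pderiv_mem_weightFiltration (by simp only [entryWeight]; omega) hF)

lemma exists_ne_zero_adjDerivation_eq_zero {n : ℕ} (e : ι → Fin n) {d : ℕ}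
    {V : Submodule K (MvPolynomial (ι × ι) K)} (hV : V ≠ ⊥)
    (hVd : V ≤ restrictTotalDegree (ι × ι) K d)
    (hadj : ∀ a b, a ≠ b → ∀ F ∈ V, adjDerivation a b F ∈ V) :
    ∃ F ∈ V, F ≠ 0 ∧ ∀ a b, e a < e b → adjDerivation a b F = 0 := by
  have hw (p : ι × ι) : entryWeight n e p ≤ 2 * n := by
    simp only [entryWeight]
    omega
  obtain ⟨F, hF, hF₀, h⟩ := exists_ne_zero_forall_map_eq_zero
    (T := fun p : {p : ι × ι // e p.1 < e p.2} => (adjDerivation (K := K) p.1.1 p.1.2).toLinearMap)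
    (W := weightFiltration K (entryWeight n e)) hV
    (fun p F hF => hadj _ _ (fun h => p.2.ne (congrArg e h)) F hF)
    (fun _ _ _ _ => Nat.zero_le _)
    (fun p _ _ hF => adjDerivation_mem_weightFiltration p.2 hF)
    (eq_bot_mono (inf_le_inf_right _ hVd) (restrictTotalDegree_inf_weightFiltration hw d))
  exact ⟨F, hF, hF₀, fun a b hab => h ⟨(a, b), hab⟩⟩

end AdjWeights

section SquareZero

open Polynomial in
lemma eval_zero_derivative_matrixEval {ι K : Type*} [CommRing K]
    {D : Derivation K (MvPolynomial (ι × ι) K) (MvPolynomial (ι × ι) K)} {γ : Matrix ι ι K[X]}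
    (hD : ∀ p, (derivative (γ p.1 p.2)).eval 0 = matrixEval (γ.map (eval 0)) (D (.X p)))
    (F : MvPolynomial (ι × ι) K) :
    (derivative (matrixEval γ F)).eval 0 = matrixEval (γ.map (eval 0)) (D F) := by
  induction F using MvPolynomial.induction_on with
  | C a => simp [matrixEval]
  | add F G hF hG => simp [hF, hG]
  | mul_X F p hF => simp [hF, hD, eval_matrixEval, mul_comm, add_comm]

section

variable {K A : Type*} [CommRing K] [Ring A] [Algebra K A]

lemma one_add_smul_mul_mul_one_sub_smul (E Y : A) (s : K) :
    (1 + s • E) * Y * (1 - s • E) = Y + s • (E * Y - Y * E) - s ^ 2 • (E * Y * E) := by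
  simp only [pow_two, mul_smul, mul_sub, add_mul, smul_mul_assoc, mul_smul_comm, one_mul, mul_one,
    smul_sub, smul_add]
  abel

lemma one_add_smul_conj_mul_self {E Y : A} (hE : E * E = 0) (hY : Y * Y = 0) (s : K) :
    (1 + s • E) * Y * (1 - s • E) * ((1 + s • E) * Y * (1 - s • E)) = 0 := by
  have hinv : (1 - s • E) * (1 + s • E) = 1 := by simp [sub_mul, mul_add, hE]
  calc (1 + s • E) * Y * (1 - s • E) * ((1 + s • E) * Y * (1 - s • E))
      = (1 + s • E) * (Y * ((1 - s • E) * (1 + s • E)) * Y) * (1 - s • E) := by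
        simp only [mul_assoc]
    _ = 0 := by rw [hinv, mul_one, hY, mul_zero, zero_mul]

end

variable {ι K : Type*} [Fintype ι] [Field K]

lemma squareZeroIdeal_le_matrixVanishingIdeal :
    squareZeroIdeal ι K ≤ matrixVanishingIdeal {Y | Y * Y = 0} := by
  classical
  refine Ideal.span_le.mpr (Set.insert_subset ?_ (Set.range_subset_iff.mpr fun p => ?_)) <;>
    refine mem_matrixVanishingIdeal.mpr fun Y (hY : Y * Y = 0) => ?_
  · rw [matrixEval_trace]
    exact (isNilpotent_trace_of_isNilpotent ⟨2, by rw [pow_two, hY]⟩).eq_zero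
  · rw [matrixEval_mul_self, hY, Matrix.zero_apply]

variable [Infinite K]

-- Differentiate `F` at `s = 0` along the curve `s ↦ (1 + sE) Y (1 - sE)` of square-zero matrices.
lemma adjDerivation_mem_matrixVanishingIdeal {a b : ι} (hab : a ≠ b)
    {F : MvPolynomial (ι × ι) K}
    (hF : F ∈ matrixVanishingIdeal {Y : Matrix ι ι K | Y * Y = 0}) :
    adjDerivation a b F ∈ matrixVanishingIdeal {Y : Matrix ι ι K | Y * Y = 0} := by
  classical
  simp only [mem_matrixVanishingIdeal] at hF ⊢
  intro Y (hY : Y * Y = 0)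
  set E : Matrix ι ι K := single b a 1
  have hE : E * E = 0 := by simp [E, hab]
  let γ : Matrix ι ι (Polynomial K) := Y.map Polynomial.C +
    (Polynomial.X : Polynomial K) • (E * Y - Y * E).map Polynomial.C -
      (Polynomial.X ^ 2 : Polynomial K) • (E * Y * E).map Polynomial.C
  have hγ (s : K) : γ.map (Polynomial.eval s) = Y + s • (E * Y - Y * E) - s ^ 2 • (E * Y * E) := by
    ext i j
    simp [γ, -Matrix.map_mul, mul_comm (_ ^ 2)]
  have hγ₀ : γ.map (Polynomial.eval 0) = Y := by simp [hγ]
  have hzero : matrixEval γ F = 0 := matrixEval_eq_zero_of_eval γ one_ne_zero fun s _ => by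
    refine hF _ ?_
    rw [hγ, ← one_add_smul_mul_mul_one_sub_smul]
    exact one_add_smul_conj_mul_self hE hY s
  have hderiv := eval_zero_derivative_matrixEval (D := adjDerivation a b) (γ := γ) (fun p => ?_) F
  · rwa [hzero, hγ₀, map_zero, Polynomial.eval_zero, eq_comm] at hderiv
  · have hadj : ((mvPolynomialX ι ι K).map (adjDerivation a b)).map (matrixEval Y) =
        E * Y - Y * E := by
      simp only [adjDerivation_genericMatrix, Matrix.map_sub _ (map_sub (matrixEval Y)),
        Matrix.map_mul, genericMatrix_map_matrixEval, Matrix.map_single, map_one, E]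
    trans (E * Y - Y * E) p.1 p.2
    · simp [γ, -Matrix.map_mul]
    · rw [hγ₀]
      exact (congr_fun₂ hadj p.1 p.2).symm

-- If no index occurs in a monomial `M` both as a row and as a column, every matrix supported on the
-- entries of `M` has square zero, so `F` vanishes on a coordinate subspace detecting `M`.
theorem eq_zero_of_mem_matrixVanishingIdeal_of_rowDegree_mul_colDegree {F : MvPolynomial (ι × ι) K}
    (hF : F ∈ matrixVanishingIdeal {Y : Matrix ι ι K | Y * Y = 0})
    (hdeg : ∀ M ∈ F.support, ∀ a, (∑ k, M (a, k)) * (∑ k, M (k, a)) = 0) : F = 0 := by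
  classical
  refine support_eq_empty.mp (Finset.eq_empty_of_forall_notMem fun M hM => ?_)
  have hinj : Function.Injective ((↑) : M.support → ι × ι) := Subtype.val_injective
  let B : Matrix ι ι (MvPolynomial M.support K) := of fun i j => killCompl hinj (X (i, j))
  have hB₀ {i j : ι} (hij : M (i, j) = 0) : B i j = 0 := by simp [B, killCompl, hij]
  have hB : B * B = 0 := by
    ext1 i j
    rw [Matrix.mul_apply]
    refine Finset.sum_eq_zero fun k _ => ?_
    rcases mul_eq_zero.mp (hdeg M hM k) with hk | hk
    · rw [hB₀ (i := k) (Finset.sum_eq_zero_iff.mp hk j (Finset.mem_univ j)), mul_zero]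
    · rw [hB₀ (j := k) (Finset.sum_eq_zero_iff.mp hk i (Finset.mem_univ i)), zero_mul]
  have hFB : matrixEval B F = 0 := MvPolynomial.funext fun x => by
    rw [map_zero]
    refine (map_matrixEval (aeval x) B F).trans (mem_matrixVanishingIdeal.mp hF _ ?_)
    change B.map _ * B.map _ = 0
    rw [← Matrix.map_mul, hB, Matrix.map_zero _ (map_zero _)]
  have hkill : matrixEval B = killCompl (R := K) hinj := algHom_ext fun p => matrixEval_X B p
  have hcoeff := coeff_killCompl hinj (p := F) (s := M.comapDomain Subtype.val hinj.injOn)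
  rw [M.mapDomain_comapDomain Subtype.val hinj fun p hp => ⟨⟨p, hp⟩, rfl⟩, ← hkill, hFB, coeff_zero]
    at hcoeff
  exact mem_support_iff.mp hM hcoeff.symm

end SquareZero

section Fischer

variable {σ 𝕜 : Type*} [Fintype σ] [RCLike 𝕜]

/-- The Fischer pairing `∑ M, M! * conj F_M * G_M` of two polynomials, where `M! = ∏ i, (M i)!`. -/
def fischerPairing (F G : MvPolynomial σ 𝕜) : 𝕜 :=
  ∑ M ∈ F.support, (∏ i, (M i)! : ℕ) * (conj (F.coeff M) * G.coeff M)

lemma fischerPairing_eq_sum {F : MvPolynomial σ 𝕜} {s : Finset (σ →₀ ℕ)} (hs : F.support ⊆ s)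
    (G : MvPolynomial σ 𝕜) :
    fischerPairing F G = ∑ M ∈ s, (∏ i, (M i)! : ℕ) * (conj (F.coeff M) * G.coeff M) :=
  Finset.sum_subset hs fun M _ hM => by simp [notMem_support_iff.mp hM]

/-- The Fischer inner product, for which multiplication by `X i` is adjoint to `∂ / ∂ X i`. -/
abbrev fischerCore : InnerProductSpace.Core 𝕜 (MvPolynomial σ 𝕜) where
  inner := fischerPairing
  conj_inner_symm F G := by
    classical
    rw [fischerPairing_eq_sum (Finset.subset_union_right (s₁ := F.support)),
      fischerPairing_eq_sum (Finset.subset_union_left (s₂ := G.support)), map_sum]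
    refine Finset.sum_congr rfl fun M _ => ?_
    simp only [map_mul, map_natCast, RCLike.conj_conj]
    ring
  re_inner_nonneg F := by
    rw [fischerPairing, map_sum]
    refine Finset.sum_nonneg fun M _ => ?_
    rw [RCLike.conj_mul]
    norm_cast
    positivity
  add_left F G H := by
    classical
    rw [fischerPairing_eq_sum support_add,
      fischerPairing_eq_sum (Finset.subset_union_left (s₂ := G.support)),
      fischerPairing_eq_sum (Finset.subset_union_right (s₁ := F.support)),
      ← Finset.sum_add_distrib]
    exact Finset.sum_congr rfl fun M _ => by simp only [coeff_add, map_add]; ring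
  smul_left F G c := by
    rw [fischerPairing_eq_sum support_smul, fischerPairing, Finset.mul_sum]
    exact Finset.sum_congr rfl fun M _ => by simp only [coeff_smul, smul_eq_mul, map_mul]; ring
  definite F h := by
    simp only [fischerPairing, RCLike.conj_mul] at h
    norm_cast at h
    rw [Finset.sum_eq_zero_iff_of_nonneg fun M _ => by positivity] at h
    refine support_eq_empty.mp (Finset.eq_empty_of_forall_notMem fun M hM => ?_)
    have := h M hM
    simp [Nat.factorial_ne_zero, Finset.prod_eq_zero_iff, mem_support_iff.mp hM] at this

/-- The norm of the Fischer inner product; not a global instance, since `MvPolynomial` has no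
preferred norm. -/
abbrev fischerNormedAddCommGroup : NormedAddCommGroup (MvPolynomial σ 𝕜) :=
  (fischerCore (σ := σ) (𝕜 := 𝕜)).toNormedAddCommGroup

attribute [local instance] fischerNormedAddCommGroup

/-- The Fischer inner product space structure on polynomials. -/
abbrev fischerInnerProductSpace : InnerProductSpace 𝕜 (MvPolynomial σ 𝕜) :=
  .ofCore fischerCore.toCore

attribute [local instance] fischerInnerProductSpace

lemma fischer_inner_eq_sum {F : MvPolynomial σ 𝕜} {s : Finset (σ →₀ ℕ)} (hs : F.support ⊆ s)
    (G : MvPolynomial σ 𝕜) :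
    ⟪F, G⟫_𝕜 = ∑ M ∈ s, (∏ i, (M i)! : ℕ) * (conj (F.coeff M) * G.coeff M) :=
  fischerPairing_eq_sum hs G

lemma fischer_inner_X_mul (i : σ) (F G : MvPolynomial σ 𝕜) :
    ⟪X i * F, G⟫_𝕜 = ⟪F, pderiv i G⟫_𝕜 := by
  classical
  rw [fischer_inner_eq_sum subset_rfl, fischer_inner_eq_sum subset_rfl, support_X_mul,
    Finset.sum_map]
  refine Finset.sum_congr rfl fun M _ => ?_
  have hfac : ∏ j, ((Finsupp.single i 1 + M : σ →₀ ℕ) j)! = (M i + 1) * ∏ j, (M j)! := by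
    rw [← Finset.mul_prod_erase _ _ (Finset.mem_univ i),
      ← Finset.mul_prod_erase _ (fun j => (M j)!) (Finset.mem_univ i), ← mul_assoc]
    congr 1
    · simp [add_comm 1, Nat.factorial_succ]
    · exact Finset.prod_congr rfl fun j hj => by
        simp [Finsupp.single_eq_of_ne (Finset.ne_of_mem_erase hj)]
  simp only [addLeftEmbedding_apply, coeff_X_mul, coeff_pderiv, hfac, add_comm M]
  push_cast
  ring

lemma fischer_inner_pderiv (i : σ) (F G : MvPolynomial σ 𝕜) :
    ⟪pderiv i F, G⟫_𝕜 = ⟪F, X i * G⟫_𝕜 := by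
  rw [← inner_conj_symm, ← fischer_inner_X_mul, inner_conj_symm]

section Adjoints

variable {ι : Type*} [Fintype ι] (a b : ι) (F G : MvPolynomial (ι × ι) 𝕜)

lemma fischer_inner_X_mul_pderiv (p q : σ) (F G : MvPolynomial σ 𝕜) :
    ⟪X p * pderiv q F, G⟫_𝕜 = ⟪F, X q * pderiv p G⟫_𝕜 := by
  rw [fischer_inner_X_mul, fischer_inner_pderiv]

lemma fischer_inner_rowPolarization :
    ⟪rowPolarization a b F, G⟫_𝕜 = ⟪F, rowPolarization b a G⟫_𝕜 := by
  simp only [rowPolarization_apply, sum_inner, inner_sum, fischer_inner_X_mul_pderiv]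

lemma fischer_inner_colPolarization :
    ⟪colPolarization a b F, G⟫_𝕜 = ⟪F, colPolarization b a G⟫_𝕜 := by
  simp only [colPolarization_apply, sum_inner, inner_sum, fischer_inner_X_mul_pderiv]

lemma fischer_inner_adjDerivation :
    ⟪adjDerivation a b F, G⟫_𝕜 = ⟪F, adjDerivation b a G⟫_𝕜 := by
  simp only [adjDerivation, Derivation.sub_apply, inner_sub_left, inner_sub_right,
    fischer_inner_rowPolarization, fischer_inner_colPolarization]

lemma re_fischer_inner_rowPolarization_colPolarization_self :
    RCLike.re ⟪F, rowPolarization a a (colPolarization a a F)⟫_𝕜 =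
      ∑ M ∈ F.support, ((∏ p, (M p)! : ℕ) * ((∑ k, M (a, k)) * (∑ k, M (k, a)) : ℕ) *
        ‖coeff M F‖ ^ 2 : ℝ) := by
  rw [fischer_inner_eq_sum subset_rfl, map_sum]
  refine Finset.sum_congr rfl fun M _ => ?_
  have hassoc (x y z c : 𝕜) : x * (conj c * (y * (z * c))) = x * (y * z) * (conj c * c) := by ring
  rw [coeff_rowPolarization_self, coeff_colPolarization_self, hassoc, RCLike.conj_mul]
  norm_cast

variable {F a b} in
lemma re_fischer_inner_rowPolarization_colPolarization_nonneg
    (h : a ≠ b → adjDerivation a b F = 0 ∨ adjDerivation b a F = 0) :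
    0 ≤ RCLike.re ⟪F, rowPolarization a b (colPolarization a b F)⟫_𝕜 := by
  by_cases hab : a = b
  · subst hab
    rw [re_fischer_inner_rowPolarization_colPolarization_self]
    positivity
  simp only [adjDerivation, Derivation.sub_apply, sub_eq_zero] at h
  rcases h hab with h | h
  · rw [rowPolarization_colPolarization_comm, h, ← fischer_inner_colPolarization]
    exact inner_self_nonneg
  · rw [← fischer_inner_rowPolarization, h]
    exact inner_self_nonneg

variable {F} in
theorem rowDegree_mul_colDegree_eq_zero
    (hF : ⟪F, ∑ a, ∑ b, rowPolarization a b (colPolarization a b F)⟫_𝕜 = 0)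
    (h : ∀ a b, a ≠ b → adjDerivation a b F = 0 ∨ adjDerivation b a F = 0)
    {M : ι × ι →₀ ℕ} (hM : M ∈ F.support) (a : ι) :
    (∑ k, M (a, k)) * (∑ k, M (k, a)) = 0 := by
  have hnonneg (a b : ι) := re_fischer_inner_rowPolarization_colPolarization_nonneg (h a b)
  have hsum := congrArg RCLike.re hF
  simp only [inner_sum, map_sum, map_zero] at hsum
  rw [Finset.sum_eq_zero_iff_of_nonneg fun a _ => Finset.sum_nonneg fun b _ => hnonneg a b] at hsum
  have haa := (Finset.sum_eq_zero_iff_of_nonneg fun b _ => hnonneg a b).mp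
    (hsum a (Finset.mem_univ a)) a (Finset.mem_univ a)
  rw [re_fischer_inner_rowPolarization_colPolarization_self,
    Finset.sum_eq_zero_iff_of_nonneg fun _ _ => by positivity] at haa
  have hfac : ∏ p, (M p)! ≠ 0 := Finset.prod_ne_zero_iff.mpr fun p _ => Nat.factorial_ne_zero _
  exact_mod_cast ((mul_eq_zero.mp (haa M hM)).resolve_right
    (by simpa using mem_support_iff.mp hM) |> mul_eq_zero.mp).resolve_left (mod_cast hfac)

end Adjoints

section Nilpotent

variable {ι 𝕜 : Type*} [Fintype ι] [RCLike 𝕜]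

theorem eq_bot_of_orthogonal_squareZeroIdeal {d : ℕ} {V : Submodule 𝕜 (MvPolynomial (ι × ι) 𝕜)}
    (hVJ : ∀ F ∈ V, F ∈ matrixVanishingIdeal {Y : Matrix ι ι 𝕜 | Y * Y = 0})
    (hVd : V ≤ restrictTotalDegree (ι × ι) 𝕜 d)
    (hadj : ∀ a b, a ≠ b → ∀ F ∈ V, adjDerivation a b F ∈ V)
    (horth : ∀ F ∈ V, ∀ G ∈ squareZeroIdeal ι 𝕜, G ∈ restrictTotalDegree (ι × ι) 𝕜 d →
      ⟪F, G⟫_𝕜 = 0) :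
    V = ⊥ := by
  classical
  by_contra hV
  obtain ⟨F, hFV, hF₀, hF⟩ :=
    exists_ne_zero_adjDerivation_eq_zero (Fintype.equivFin ι) hV hVd hadj
  refine hF₀ (eq_zero_of_mem_matrixVanishingIdeal_of_rowDegree_mul_colDegree (hVJ F hFV)
    fun M hM => rowDegree_mul_colDegree_eq_zero
      (horth F hFV _ (sum_rowPolarization_colPolarization_mem F) ?_) (fun a b hab => ?_) hM)
  · exact sum_mem fun a _ => sum_mem fun b _ => rowPolarization_mem_restrictTotalDegree _ _
      (colPolarization_mem_restrictTotalDegree _ _ (hVd hFV))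
  · exact (((Fintype.equivFin ι).injective.ne hab).lt_or_gt).imp (hF a b) (hF b a)

theorem matrixVanishingIdeal_mul_self_eq_zero :
    matrixVanishingIdeal {Y : Matrix ι ι 𝕜 | Y * Y = 0} = squareZeroIdeal ι 𝕜 := by
  classical
  refine le_antisymm (fun F hF => ?_) squareZeroIdeal_le_matrixVanishingIdeal
  set d := F.totalDegree
  let W := (squareZeroIdeal ι 𝕜).restrictScalars 𝕜 ⊓ restrictTotalDegree (ι × ι) 𝕜 d
  have : FiniteDimensional 𝕜 W := Submodule.finiteDimensional_of_le inf_le_right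
  let V := (matrixVanishingIdeal {Y : Matrix ι ι 𝕜 | Y * Y = 0}).restrictScalars 𝕜 ⊓
    restrictTotalDegree (ι × ι) 𝕜 d ⊓ Wᗮ
  have hV : V = ⊥ := by
    refine eq_bot_of_orthogonal_squareZeroIdeal (fun F hF => hF.1.1) (fun F hF => hF.1.2)
      (fun a b hab F hF => ⟨⟨adjDerivation_mem_matrixVanishingIdeal hab hF.1.1,
        adjDerivation_mem_restrictTotalDegree a b hF.1.2⟩, fun G hG => ?_⟩)
      fun F hF G hG hGd => W.inner_left_of_mem_orthogonal ⟨hG, hGd⟩ hF.2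
    rw [← fischer_inner_adjDerivation]
    exact hF.2 _ ⟨adjDerivation_mem_squareZeroIdeal b a hG.1,
      adjDerivation_mem_restrictTotalDegree b a hG.2⟩
  obtain ⟨G, hG, H, hH, hFGH⟩ := W.exists_add_mem_mem_orthogonal F
  have hHF : H = F - G := eq_sub_of_add_eq' hFGH.symm
  have hHV : H ∈ V := by
    refine ⟨?_, hH⟩
    rw [hHF]
    exact sub_mem ⟨hF, (mem_restrictTotalDegree _ _ _).mpr le_rfl⟩
      ⟨squareZeroIdeal_le_matrixVanishingIdeal hG.1, hG.2⟩
  rw [hV, Submodule.mem_bot, hHF, sub_eq_zero] at hHV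
  exact hHV ▸ hG.1

end Nilpotent

end Fischer

section Involutions

open Module

lemma exists_submodule_between_finrank_eq {K V : Type*} [DivisionRing K] [AddCommGroup V]
    [Module K V] [FiniteDimensional K V] {A B : Submodule K V} (hAB : A ≤ B) {k : ℕ}
    (hA : finrank K A ≤ k) (hB : k ≤ finrank K B) :
    ∃ U, A ≤ U ∧ U ≤ B ∧ finrank K U = k := by
  induction k, hA using Nat.le_induction with
  | base => exact ⟨A, le_rfl, hAB, rfl⟩
  | succ k _ ih =>
    obtain ⟨U, hAU, hUB, hU⟩ := ih (Nat.le_of_succ_le hB)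
    have hBU : ¬ B ≤ U := fun h => by have := Submodule.finrank_mono h; omega
    obtain ⟨v, hvB, hvU⟩ := SetLike.not_le_iff_exists.mp hBU
    exact ⟨U ⊔ K ∙ v, hAU.trans le_sup_left,
      sup_le hUB ((Submodule.span_singleton_le_iff_mem v B).mpr hvB),
      by rw [Submodule.finrank_sup_span_singleton hvU, hU]⟩

variable {K V : Type*} [Field K] [AddCommGroup V] [Module K V] [FiniteDimensional K V]

lemma exists_mul_self_eq_one_of_mul_self_eq_zero {r : ℕ} (hr : finrank K V = 2 * r)
    {N : End K V} (hN : N * N = 0) :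
    ∃ E : End K V, E * E = 1 ∧ LinearMap.trace K V E = 0 ∧ E * N = N ∧ N * E = -N := by
  have hle : N.range ≤ N.ker := LinearMap.range_le_ker_iff.mpr hN
  have hdim := N.finrank_range_add_finrank_ker
  have := Submodule.finrank_mono hle
  obtain ⟨U, hNU, hUN, hU⟩ := exists_submodule_between_finrank_eq hle (k := r) (by omega) (by omega)
  obtain ⟨U', hUU'⟩ := U.exists_isCompl
  let P : End K V := U.projection U' hUU'
  have hP : IsIdempotentElem P := Submodule.isIdempotentElem_projection hUU'
  have htr : LinearMap.trace K V P = r := by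
    rw [(LinearMap.IsIdempotentElem.isProj_range P hP).trace, Submodule.range_projection, hU]
  have hPN : P * N = N := (LinearMap.IsIdempotentElem.comp_eq_right_iff hP N).mpr (by
    rwa [Submodule.range_projection])
  have hNP : N * P = 0 := by
    refine LinearMap.range_le_ker_iff.mp ?_
    rwa [Submodule.range_projection]
  refine ⟨2 * P - 1, ?_, ?_, ?_, ?_⟩
  · calc _ = 4 * (P * P - P) + 1 := by noncomm_ring
      _ = 1 := by rw [hP.eq, sub_self, mul_zero, zero_add]
  · rw [two_mul, map_sub, map_add, htr, LinearMap.trace_one, hr]; push_cast; ring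
  · rw [sub_mul, mul_assoc, hPN]; noncomm_ring
  · rw [mul_sub, two_mul, mul_add, hNP]; simp

lemma isIdempotentElem_half_one_add [NeZero (2 : K)] {A : Type*} [Ring A] [Algebra K A] {a : A}
    (ha : a * a = 1) : IsIdempotentElem ((2 : K)⁻¹ • (1 + a)) := by
  have h : (1 + a) * (1 + a) = (2 : K) • (1 + a) := by
    rw [two_smul, mul_add, add_mul, add_mul, ha]; noncomm_ring
  rw [IsIdempotentElem, smul_mul_smul_comm, h, smul_smul, inv_mul_cancel_right₀ two_ne_zero]

variable [CharZero K]

lemma isConj_of_isIdempotentElem {p q : End K V} (hp : IsIdempotentElem p)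
    (hq : IsIdempotentElem q) (h : LinearMap.trace K V p = LinearMap.trace K V q) :
    IsConj p q := by
  have hp' := LinearMap.IsIdempotentElem.isProj_range p hp
  have hq' := LinearMap.IsIdempotentElem.isProj_range q hq
  rw [hp'.trace, hq'.trace, Nat.cast_inj] at h
  have hker : finrank K p.ker = finrank K q.ker := by
    have := p.finrank_range_add_finrank_ker
    have := q.finrank_range_add_finrank_ker
    omega
  let eP := p.range.prodEquivOfIsCompl p.ker hp'.isCompl
  let eQ := q.range.prodEquivOfIsCompl q.ker hq'.isCompl
  let eRange : p.range ≃ₗ[K] q.range := .ofFinrankEq _ _ h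
  let eKer : p.ker ≃ₗ[K] q.ker := .ofFinrankEq _ _ hker
  let e := eRange.prodCongr eKer
  refine ⟨LinearMap.GeneralLinearGroup.ofLinearEquiv ((eP.symm.trans e).trans eQ), ?_⟩
  refine LinearMap.ext fun v => ?_
  obtain ⟨⟨x, y⟩, rfl⟩ := eP.surjective v
  have hpx : p (eP (x, y)) = eP (x, 0) := by simp [eP, hp'.map_id x x.2]
  have hqx (x' : q.range) (y' : q.ker) : q (eQ (x', y')) = eQ (x', 0) := by
    simp [eQ, hq'.map_id x' x'.2]
  change eQ (e (eP.symm (p (eP (x, y))))) = q (eQ (e (eP.symm (eP (x, y)))))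
  rw [hpx, eP.symm_apply_apply, eP.symm_apply_apply]
  simp only [e, LinearEquiv.prodCongr_apply, hqx, map_zero]

lemma isConj_of_mul_self_eq_one {f g : End K V} (hf : f * f = 1) (hg : g * g = 1)
    (h : LinearMap.trace K V f = LinearMap.trace K V g) : IsConj f g := by
  obtain ⟨c, hc⟩ := isConj_of_isIdempotentElem (isIdempotentElem_half_one_add (K := K) hf)
    (isIdempotentElem_half_one_add hg) (by rw [map_smul, map_smul, map_add, map_add, h])
  have htwo (f : End K V) : f = (2 : K) • (2 : K)⁻¹ • (1 + f) - 1 := by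
    rw [smul_inv_smul₀ two_ne_zero, add_sub_cancel_left]
  refine ⟨c, ?_⟩
  rw [htwo f, htwo g]
  exact (hc.smul_right _).sub_right (SemiconjBy.one_right _)

lemma exists_finrank_eq_two_mul_of_mul_self_eq_one {f : End K V} (hf : f * f = 1)
    (htr : LinearMap.trace K V f = 0) :
    ∃ r, finrank K V = 2 * r := by
  have h := (LinearMap.IsIdempotentElem.isProj_range _
    (isIdempotentElem_half_one_add (K := K) hf)).trace
  rw [map_smul, map_add, htr, add_zero, LinearMap.trace_one, smul_eq_mul,
    inv_mul_eq_iff_eq_mul₀ two_ne_zero] at h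
  exact ⟨_, mod_cast h⟩

end Involutions

section Homogeneous

attribute [local instance] MvPolynomial.gradedAlgebra

-- Graded Nakayama: iterating gives `J ≤ I ⊔ 𝔪 ^ n` for all `n`, which decides each degree.
lemma le_of_le_sup_idealOfVars_mul {σ R : Type*} [CommRing R] {I J : Ideal (MvPolynomial σ R)}
    (hI : I.IsHomogeneous (homogeneousSubmodule σ R)) (h : J ≤ I ⊔ idealOfVars σ R * J) :
    J ≤ I := by
  have hpow (n : ℕ) : J ≤ I ⊔ idealOfVars σ R ^ n := by
    induction n with
    | zero => simp
    | succ n ih =>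
      refine h.trans (sup_le le_sup_left ((Ideal.mul_mono_right ih).trans ?_))
      rw [Ideal.mul_sup, pow_succ']
      exact sup_le_sup_right Ideal.mul_le_right _
  refine fun f hf => (mem_iff_homogeneousComponent_mem hI f).mpr fun n => ?_
  obtain ⟨p, hp, q, hq, rfl⟩ := Submodule.mem_sup.mp (hpow (n + 1) hf)
  have hqn : homogeneousComponent n q = 0 := by
    ext M
    rw [coeff_homogeneousComponent, coeff_zero, ite_eq_right_iff]
    rintro rfl
    exact (mem_pow_idealOfVars_iff' _ _).mp hq M (Nat.lt_succ_self _)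
  rw [map_add, hqn, add_zero]
  exact homogeneousComponent_mem_of_mem hI hp n

end Homogeneous

section ScalarSquare

variable {ι K : Type*} [Fintype ι] [Field K]

variable (ι K) in
/-- The polynomial `X ↦ tr(X²) / n` on `n × n` matrices. -/
def normalizedTraceSq : MvPolynomial (ι × ι) K :=
  C (Fintype.card ι : K)⁻¹ * trace (mvPolynomialX ι ι K * mvPolynomialX ι ι K)

lemma matrixEval_normalizedTraceSq (A : Matrix ι ι K) :
    matrixEval A (normalizedTraceSq ι K) = (Fintype.card ι : K)⁻¹ * trace (A * A) := by
  simp only [normalizedTraceSq, map_mul, trace, map_sum, diag_apply, matrixEval_mul_self]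
  simp [matrixEval]

lemma isHomogeneous_genericMatrix_mul_self (i j : ι) :
    ((mvPolynomialX ι ι K * mvPolynomialX ι ι K) i j).IsHomogeneous 2 := by
  rw [Matrix.mul_apply]
  exact .sum _ _ _ fun k _ => (isHomogeneous_X K (i, k)).mul (isHomogeneous_X K (k, j))

lemma isHomogeneous_normalizedTraceSq : (normalizedTraceSq ι K).IsHomogeneous 2 :=
  .C_mul (.sum _ _ _ fun i _ => isHomogeneous_genericMatrix_mul_self i i) _

lemma normalizedTraceSq_mem_idealOfVars : normalizedTraceSq ι K ∈ idealOfVars (ι × ι) K :=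
  Ideal.mul_mem_left _ _ <| sum_mem fun i _ => sum_mem fun _ _ =>
    Ideal.mul_mem_right _ _ (Ideal.subset_span ⟨(i, _), rfl⟩)

variable [DecidableEq ι]

variable (ι K) in
/-- The ideal of `K[Mat_n]` generated by the trace and by the entries of `X² - (tr(X²)/n) • 1`. -/
def scalarSquareIdeal : Ideal (MvPolynomial (ι × ι) K) :=
  Ideal.span (insert (trace (mvPolynomialX ι ι K)) (Set.range fun p : ι × ι =>
    (mvPolynomialX ι ι K * mvPolynomialX ι ι K) p.1 p.2 -
      normalizedTraceSq ι K * (1 : Matrix ι ι _) p.1 p.2))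

attribute [local instance] MvPolynomial.gradedAlgebra in
lemma isHomogeneous_scalarSquareIdeal :
    (scalarSquareIdeal ι K).IsHomogeneous (homogeneousSubmodule (ι × ι) K) := by
  refine Ideal.homogeneous_span _ _ ?_
  rw [Set.forall_mem_insert, Set.forall_mem_range]
  refine ⟨⟨1, .sum _ _ _ fun i _ => isHomogeneous_X K (i, i)⟩, fun p => ⟨2, ?_⟩⟩
  refine (isHomogeneous_genericMatrix_mul_self p.1 p.2).sub ?_
  rw [one_apply, mul_ite, mul_one, mul_zero]
  split_ifs
  exacts [isHomogeneous_normalizedTraceSq, isHomogeneous_zero _ _ _]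

lemma squareZeroIdeal_le_sup :
    squareZeroIdeal ι K ≤ scalarSquareIdeal ι K ⊔ Ideal.span {normalizedTraceSq ι K} := by
  refine Ideal.span_le.mpr (Set.insert_subset ?_ (Set.range_subset_iff.mpr fun p => ?_))
  · exact Ideal.mem_sup_left (Ideal.subset_span (Set.mem_insert _ _))
  · rw [SetLike.mem_coe, ← sub_add_cancel ((mvPolynomialX ι ι K * mvPolynomialX ι ι K) p.1 p.2)
      (normalizedTraceSq ι K * (1 : Matrix ι ι _) p.1 p.2)]
    exact add_mem
      (Ideal.mem_sup_left (Ideal.subset_span (Set.mem_insert_of_mem _ (Set.mem_range_self p))))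
      (Ideal.mem_sup_right (Ideal.mul_mem_right _ _ (Ideal.mem_span_singleton_self _)))

variable [CharZero K]

lemma isConj_matrix_of_mul_self_eq_one {D E : Matrix ι ι K} (hD : D * D = 1) (hE : E * E = 1)
    (h : D.trace = E.trace) : IsConj D E := by
  let e := toLinAlgEquiv' (R := K) (n := ι)
  have htrace (A : Matrix ι ι K) : LinearMap.trace K (ι → K) (e A) = A.trace := trace_toLin'_eq A
  have he : IsConj (e D) (e E) := isConj_of_mul_self_eq_one (by rw [← map_mul, hD, map_one])
    (by rw [← map_mul, hE, map_one]) (by rw [htrace, htrace, h])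
  simpa using (e.symm : _ →* Matrix ι ι K).map_isConj he

lemma exists_matrix_mul_self_eq_one_of_mul_self_eq_zero {D Y : Matrix ι ι K} (hD : D * D = 1)
    (htr : D.trace = 0) (hY : Y * Y = 0) :
    ∃ E : Matrix ι ι K, E * E = 1 ∧ E.trace = 0 ∧ E * Y = Y ∧ Y * E = -Y := by
  let e := toLinAlgEquiv' (R := K) (n := ι)
  have htrace (A : Matrix ι ι K) : LinearMap.trace K (ι → K) (e A) = A.trace := trace_toLin'_eq A
  obtain ⟨r, hr⟩ := exists_finrank_eq_two_mul_of_mul_self_eq_one (f := e D)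
    (by rw [← map_mul, hD, map_one]) (by rw [htrace, htr])
  obtain ⟨E, hE, hEtr, hEY, hYE⟩ := exists_mul_self_eq_one_of_mul_self_eq_zero hr (N := e Y)
    (by rw [← map_mul, hY, map_zero])
  refine ⟨e.symm E, e.injective ?_, ?_, e.injective ?_, e.injective ?_⟩
  · simpa using hE
  · rw [← htrace, e.apply_symm_apply, hEtr]
  · simpa using hEY
  · simpa using hYE

end ScalarSquare

section IsPrime

variable {ι K : Type*} [Field K] [Infinite K]

open Polynomial in
lemma isPrime_matrixVanishingIdeal {S : Set (Matrix ι ι K)} (hS : S.Nonempty)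
    (h : ∀ A ∈ S, ∀ B ∈ S, ∃ (γ : Matrix ι ι K[X]) (q : K[X]), q ≠ 0 ∧
      (∀ s, q.eval s ≠ 0 → γ.map (eval s) ∈ S) ∧ γ.map (eval 0) = A ∧ γ.map (eval 1) = B) :
    (matrixVanishingIdeal S).IsPrime := by
  refine ⟨fun htop => ?_, fun {F G} hFG => ?_⟩
  · obtain ⟨A, hA⟩ := hS
    have := mem_matrixVanishingIdeal.mp ((Ideal.eq_top_iff_one _).mp htop) A hA
    rw [map_one] at this
    exact one_ne_zero this
  · simp only [mem_matrixVanishingIdeal] at hFG ⊢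
    by_contra! hne
    obtain ⟨⟨A, hA, hFA⟩, B, hB, hGB⟩ := hne
    obtain ⟨γ, q, hq, hγ, rfl, rfl⟩ := h A hA B hB
    have hmul := matrixEval_eq_zero_of_eval γ hq fun s hs => hFG _ (hγ s hs)
    rw [map_mul, mul_eq_zero] at hmul
    rcases hmul with hF | hG
    · exact hFA (by rw [← eval_matrixEval, hF, Polynomial.eval_zero])
    · exact hGB (by rw [← eval_matrixEval, hG, Polynomial.eval_zero])

end IsPrime

section ConjCone

variable {ι K : Type*} [Fintype ι] [DecidableEq ι] [Field K]

lemma map_smul_mul_mul_adjugate {R S : Type*} [CommRing R] [CommRing S] (f : R →+* S) (c : R)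
    (G D : Matrix ι ι R) : (c • (G * D * G.adjugate)).map f =
      f c • (G.map f * D.map f * (G.map f).adjugate) := by
  rw [Matrix.map_smulₛₗ _ f c (map_mul f c), Matrix.map_mul, Matrix.map_mul]
  exact congrArg _ (congrArg _ (f.map_adjugate G))

/-- The cone `Kˣ • (GL · D)` over the conjugacy class of a matrix `D`. -/
def conjCone (D : Matrix ι ι K) : Set (Matrix ι ι K) :=
  {A | ∃ t : K, t ≠ 0 ∧ ∃ g : GL ι K,
    A = t • ((g : Matrix ι ι K) * D * (↑g⁻¹ : Matrix ι ι K))}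

lemma self_mem_conjCone (D : Matrix ι ι K) : D ∈ conjCone D :=
  ⟨1, one_ne_zero, 1, by simp⟩

lemma smul_mul_mul_adjugate_mem_conjCone (D : Matrix ι ι K) {c : K} {g : Matrix ι ι K}
    (hc : c ≠ 0) (hg : g.det ≠ 0) : c • (g * D * g.adjugate) ∈ conjCone D := by
  refine ⟨c * g.det, mul_ne_zero hc hg, GeneralLinearGroup.mkOfDetNeZero g hg, ?_⟩
  rw [coe_units_inv, inv_def, mul_smul_comm, smul_smul]
  simp [GeneralLinearGroup.mkOfDetNeZero, mul_assoc, hg]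

lemma exists_smul_mul_mul_adjugate_eq {D A : Matrix ι ι K} (hA : A ∈ conjCone D) :
    ∃ c : K, c ≠ 0 ∧ ∃ g : Matrix ι ι K, g.det ≠ 0 ∧ A = c • (g * D * g.adjugate) := by
  obtain ⟨t, ht, g, rfl⟩ := hA
  have hg : (g : Matrix ι ι K).det ≠ 0 := g.det.ne_zero
  refine ⟨t / (g : Matrix ι ι K).det, div_ne_zero ht hg, g, hg, ?_⟩
  rw [coe_units_inv, inv_def, mul_smul_comm, smul_smul, Ring.inverse_eq_inv, div_eq_mul_inv]

lemma isPrime_matrixVanishingIdeal_conjCone [Infinite K] (D : Matrix ι ι K) :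
    (matrixVanishingIdeal (conjCone D)).IsPrime := by
  refine isPrime_matrixVanishingIdeal ⟨D, self_mem_conjCone D⟩ fun A hA B hB => ?_
  obtain ⟨a, ha, g, hg, rfl⟩ := exists_smul_mul_mul_adjugate_eq hA
  obtain ⟨b, -, h, -, rfl⟩ := exists_smul_mul_mul_adjugate_eq hB
  let c : Polynomial K := .C a + .X * .C (b - a)
  let G : Matrix ι ι (Polynomial K) := g.map .C + (.X : Polynomial K) • (h - g).map .C
  have hc (s : K) : c.eval s = a + s * (b - a) := by simp [c]
  have hG (s : K) : G.map (Polynomial.eval s) = g + s • (h - g) := by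
    ext i j
    simp [G]
  have hdet (s : K) : G.det.eval s = (g + s • (h - g)).det := by
    rw [← hG]
    exact (Polynomial.evalRingHom s).map_det G
  have hγ (s : K) : (c • (G * D.map Polynomial.C * G.adjugate)).map (Polynomial.eval s) =
      (a + s * (b - a)) • ((g + s • (h - g)) * D * (g + s • (h - g)).adjugate) := by
    rw [← hc, ← hG]
    refine (map_smul_mul_mul_adjugate (Polynomial.evalRingHom s) c G _).trans ?_
    simp [Function.comp_def]
  refine ⟨c • (G * D.map Polynomial.C * G.adjugate), c * G.det, fun h0 => ?_, fun s hs => ?_,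
    ?_, ?_⟩
  · have := congrArg (Polynomial.eval 0) h0
    simp [hc, hdet, ha, hg] at this
  · rw [Polynomial.eval_mul, hc, hdet] at hs
    rw [hγ]
    exact smul_mul_mul_adjugate_mem_conjCone D (left_ne_zero_of_mul hs) (right_ne_zero_of_mul hs)
  · simp [hγ]
  · simp [hγ]

variable {D : Matrix ι ι K}

lemma trace_eq_zero_of_mem_conjCone (htr : D.trace = 0) {A : Matrix ι ι K}
    (hA : A ∈ conjCone D) : A.trace = 0 := by
  obtain ⟨t, -, g, rfl⟩ := hA
  rw [trace_smul, trace_mul_cycle, Units.inv_mul, one_mul, htr, smul_zero]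

lemma exists_mul_self_eq_of_mem_conjCone (hD : D * D = 1) {A : Matrix ι ι K}
    (hA : A ∈ conjCone D) : ∃ t : K, t ≠ 0 ∧ A * A = t ^ 2 • 1 := by
  obtain ⟨t, ht, g, rfl⟩ := hA
  refine ⟨t, ht, ?_⟩
  rw [smul_mul_smul_comm, ← sq]
  congr 1
  calc (g : Matrix ι ι K) * D * (↑g⁻¹ : Matrix ι ι K) * (g * D * (↑g⁻¹ : Matrix ι ι K))
      = g * D * ((↑g⁻¹ : Matrix ι ι K) * g) * D * (↑g⁻¹ : Matrix ι ι K) := by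
        simp only [mul_assoc]
    _ = 1 := by
        rw [Units.inv_mul, mul_one, mul_assoc (g : Matrix ι ι K), hD, mul_one, Units.mul_inv]

variable [CharZero K]

lemma mem_conjCone_of_mul_self_eq (hD : D * D = 1) (htr : D.trace = 0) {A : Matrix ι ι K}
    (hA : A.trace = 0) {t : K} (ht : t ≠ 0) (hAA : A * A = t ^ 2 • 1) : A ∈ conjCone D := by
  have hE : t⁻¹ • A * t⁻¹ • A = 1 := by
    rw [smul_mul_smul_comm, hAA, smul_smul, ← sq, ← mul_pow, inv_mul_cancel₀ ht, one_pow, one_smul]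
  obtain ⟨g, hg⟩ := isConj_matrix_of_mul_self_eq_one hD hE (by rw [trace_smul, hA, htr, smul_zero])
  refine ⟨t, ht, g, ?_⟩
  rw [hg.eq, mul_assoc, Units.mul_inv, mul_one, smul_smul, mul_inv_cancel₀ ht, one_smul]

lemma matrixVanishingIdeal_conjCone_le (hD : D * D = 1) (htr : D.trace = 0) :
    matrixVanishingIdeal (conjCone D) ≤ matrixVanishingIdeal {Y | Y * Y = 0} := by
  intro F hF
  rw [mem_matrixVanishingIdeal] at hF ⊢
  intro Y (hY : Y * Y = 0)
  obtain ⟨E, hE, hEtr, hEY, hYE⟩ := exists_matrix_mul_self_eq_one_of_mul_self_eq_zero hD htr hY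
  let γ : Matrix ι ι (Polynomial K) := Y.map .C + (.X : Polynomial K) • E.map .C
  have hγ (s : K) : γ.map (Polynomial.eval s) = Y + s • E := by
    ext i j
    simp [γ, mul_comm s]
  have hYtr : Y.trace = 0 := (isNilpotent_trace_of_isNilpotent ⟨2, by rw [sq, hY]⟩).eq_zero
  have hF0 : matrixEval γ F = 0 := by
    refine matrixEval_eq_zero_of_eval γ Polynomial.X_ne_zero fun s hs => hF _ ?_
    rw [Polynomial.eval_X] at hs
    refine mem_conjCone_of_mul_self_eq hD htr ?_ hs ?_
    · rw [hγ, trace_add, trace_smul, hYtr, hEtr, smul_zero, add_zero]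
    · rw [hγ, add_mul, mul_add, mul_add, hY, mul_smul_comm, smul_mul_assoc, hEY, hYE,
        smul_mul_smul_comm, hE, sq]
      simp
  have hγ0 : γ.map (Polynomial.eval 0) = Y := by rw [hγ, zero_smul, add_zero]
  rw [← hγ0, ← eval_matrixEval, hF0, Polynomial.eval_zero]

lemma matrixEval_normalizedTraceSq_of_mul_self_eq [Nonempty ι] {A : Matrix ι ι K} {c : K}
    (hA : A * A = c • 1) : matrixEval A (normalizedTraceSq ι K) = c := by
  rw [matrixEval_normalizedTraceSq, hA, trace_smul, trace_one, smul_eq_mul, mul_left_comm,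
    inv_mul_cancel₀ (Nat.cast_ne_zero.mpr Fintype.card_ne_zero), mul_one]

lemma scalarSquareIdeal_le_matrixVanishingIdeal [Nonempty ι] (hD : D * D = 1) (htr : D.trace = 0) :
    scalarSquareIdeal ι K ≤ matrixVanishingIdeal (conjCone D) := by
  refine Ideal.span_le.mpr (Set.insert_subset ?_ (Set.range_subset_iff.mpr fun p => ?_)) <;>
    refine mem_matrixVanishingIdeal.mpr fun A hA => ?_
  · rw [matrixEval_trace, trace_eq_zero_of_mem_conjCone htr hA]
  · obtain ⟨t, -, hAA⟩ := exists_mul_self_eq_of_mem_conjCone hD hA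
    rw [map_sub, map_mul, matrixEval_mul_self, matrixEval_normalizedTraceSq_of_mul_self_eq hAA, hAA]
    rcases eq_or_ne p.1 p.2 with h | h <;> simp [one_apply, h]

theorem matrixVanishingIdeal_conjCone {ι 𝕜 : Type*} [Fintype ι] [DecidableEq ι] [Nonempty ι]
    [RCLike 𝕜] {D : Matrix ι ι 𝕜} (hD : D * D = 1) (htr : D.trace = 0) :
    matrixVanishingIdeal (conjCone D) = scalarSquareIdeal ι 𝕜 := by
  have hle := scalarSquareIdeal_le_matrixVanishingIdeal hD htr
  refine le_antisymm (le_of_le_sup_idealOfVars_mul isHomogeneous_scalarSquareIdeal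
    fun F hF => ?_) hle
  have hF_nilp : F ∈ squareZeroIdeal ι 𝕜 :=
    matrixVanishingIdeal_mul_self_eq_zero.le (matrixVanishingIdeal_conjCone_le hD htr hF)
  obtain ⟨P, hP, Q, hQ, rfl⟩ := Submodule.mem_sup.mp (squareZeroIdeal_le_sup hF_nilp)
  obtain ⟨H, rfl⟩ := Ideal.mem_span_singleton'.mp hQ
  have hH : H ∈ matrixVanishingIdeal (conjCone D) := mem_matrixVanishingIdeal.mpr fun A hA => by
    obtain ⟨t, ht, hAA⟩ := exists_mul_self_eq_of_mem_conjCone hD hA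
    have hHA := mem_matrixVanishingIdeal.mp ((Ideal.add_mem_iff_right _ (hle hP)).mp hF) A hA
    rw [map_mul, matrixEval_normalizedTraceSq_of_mul_self_eq hAA] at hHA
    exact (mul_eq_zero.mp hHA).resolve_right (pow_ne_zero 2 ht)
  exact add_mem (Ideal.mem_sup_left hP) <| Ideal.mem_sup_right <| mul_comm H _ ▸
    Ideal.mul_mem_mul normalizedTraceSq_mem_idealOfVars hH

end ConjCone

section Restriction

/-- Restriction of polynomials in the matrix entries to `sl_n(ℂ)`. -/
def slRestrict (n : ℕ) : MvPolynomial (Fin n × Fin n) ℂ →ₐ[ℂ] polyFns n :=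
  aeval fun p => ⟨fun X => X.1 p.1 p.2, Algebra.subset_adjoin ⟨p.1, p.2, rfl⟩⟩

variable {n : ℕ}

lemma slRestrict_apply (F : MvPolynomial (Fin n × Fin n) ℂ) (X : slS n) :
    (slRestrict n F : slS n → ℂ) X = matrixEval X.1 F := by
  have : ((Pi.evalAlgHom ℂ (fun _ : slS n => ℂ) X).comp (polyFns n).val).comp (slRestrict n) =
      matrixEval X.1 := by
    ext p
    simp [slRestrict]
  exact DFunLike.congr_fun this F

lemma slRestrict_surjective : Function.Surjective (slRestrict n) := by
  rw [← AlgHom.range_eq_top, slRestrict, aeval_range, eq_top_iff]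
  refine Algebra.adjoin_adjoin_coe_preimage.ge.trans (Algebra.adjoin_mono ?_)
  rintro p ⟨i, j, hp⟩
  exact ⟨(i, j), Subtype.ext hp.symm⟩

lemma slRestrict_trace : slRestrict n (trace (mvPolynomialX (Fin n) (Fin n) ℂ)) = 0 := by
  ext X
  rw [slRestrict_apply, matrixEval_trace]
  exact X.2

lemma map_slRestrict_scalarSquareIdeal :
    (scalarSquareIdeal (Fin n) ℂ).map (slRestrict n) =
      Ideal.span {p : polyFns n | ∃ i j : Fin n, (p : slS n → ℂ) = fun X =>
        (X.1 * X.1) i j - (X.1 * X.1).trace / n * (1 : Mat n) i j} := by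
  rw [scalarSquareIdeal, Ideal.map_span, Set.image_insert_eq, slRestrict_trace,
    Ideal.span_insert_zero, ← Set.range_comp]
  congr 1
  have hgen (i j : Fin n) : (slRestrict n
      ((mvPolynomialX (Fin n) (Fin n) ℂ * mvPolynomialX (Fin n) (Fin n) ℂ) i j -
        normalizedTraceSq (Fin n) ℂ * (1 : Matrix (Fin n) (Fin n) _) i j) : slS n → ℂ) =
      fun X => (X.1 * X.1) i j - (X.1 * X.1).trace / n * (1 : Mat n) i j := by
    ext X
    rw [slRestrict_apply, map_sub, map_mul, matrixEval_mul_self, matrixEval_normalizedTraceSq,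
      Fintype.card_fin, div_eq_inv_mul]
    rcases eq_or_ne i j with h | h <;> simp [one_apply, h]
  ext p
  simp only [Set.mem_range, Prod.exists, Function.comp_apply, Set.mem_ofPred_eq, ← hgen,
    SetLike.coe_eq_coe, eq_comm]

variable {S : Set (Mat n)}

lemma ker_slRestrict_le (hS : ∀ A ∈ S, A.trace = 0) :
    RingHom.ker (slRestrict n) ≤ matrixVanishingIdeal S := fun F hF =>
  mem_matrixVanishingIdeal.mpr fun A hA => by
    rw [← slRestrict_apply F ⟨A, hS A hA⟩, (RingHom.mem_ker).mp hF]
    rfl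

lemma slRestrict_mem_map_iff (hS : ∀ A ∈ S, A.trace = 0) (F : MvPolynomial (Fin n × Fin n) ℂ) :
    slRestrict n F ∈ (matrixVanishingIdeal S).map (slRestrict n) ↔
      ∀ X : slS n, X.1 ∈ S → (slRestrict n F : slS n → ℂ) X = 0 := by
  rw [← Ideal.mem_comap, Ideal.comap_map_of_surjective' _ slRestrict_surjective,
    sup_eq_left.mpr (ker_slRestrict_le hS), mem_matrixVanishingIdeal]
  simp only [slRestrict_apply]
  exact ⟨fun h X => h X.1, fun h A hA => h ⟨A, hS A hA⟩ hA⟩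

lemma forall_mem_slZclosure_iff {C : Set (slS n)} (p : polyFns n) :
    (∀ X ∈ slZclosure n C, (p : slS n → ℂ) X = 0) ↔ ∀ X ∈ C, (p : slS n → ℂ) X = 0 := by
  refine ⟨fun h X hX => h X (Set.mem_sInter.mpr fun Z hZ => hZ.2 hX), fun h X hX => ?_⟩
  refine Set.mem_sInter.mp hX {Y | (p : slS n → ℂ) Y = 0} ⟨⟨{↑p}, ?_, ?_⟩, h⟩
  · exact Set.singleton_subset_iff.mpr p.2
  · simp only [Set.mem_singleton_iff, forall_eq]

end Restriction

section SignDiagonal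

lemma diagonal_ite_one_neg_one_mul_self {ι R : Type*} [Fintype ι] [DecidableEq ι] [Ring R]
    (P : ι → Prop) [DecidablePred P] :
    (diagonal fun i => if P i then (1 : R) else -1) * (diagonal fun i => if P i then 1 else -1) =
      1 := by
  rw [diagonal_mul_diagonal, ← diagonal_one]
  congr 1 with i
  split_ifs <;> simp

lemma trace_diagonal_ite_lt {R : Type*} [Ring R] (m : ℕ) :
    trace (diagonal fun i : Fin (2 * m) => if (i : ℕ) < m then (1 : R) else -1) = 0 := by
  rw [trace_diagonal, ← (finSumFinEquiv.trans (finCongr (two_mul m).symm)).sum_comp,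
    Fintype.sum_sum_type]
  simp

end SignDiagonal

theorem stmt_14 (m : ℕ) (hm : 2 ≤ m)
    -- `I` is the ideal of `ℂ[sl_{2m}]` generated by the entries of
    -- `X ↦ X² − (tr(X²)/2m)·I_{2m}`
    (I : Ideal (polyFns (2 * m)))
    (hI : I = Ideal.span {p : polyFns (2 * m) | ∃ i j : Fin (2 * m),
      (p : ↥(slS (2 * m)) → ℂ) = fun X =>
        (X.1 * X.1) i j - ((X.1 * X.1).trace / (2 * m)) * (1 : Mat (2 * m)) i j})
    -- `D = diag(1,…,1,−1,…,−1)` with `m` ones and `m` minus-ones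
    (D : Mat (2 * m))
    (hD : D = Matrix.diagonal fun i : Fin (2 * m) => if (i : ℕ) < m then (1 : ℂ) else -1) :
    I.IsPrime ∧
    ∀ p : polyFns (2 * m), p ∈ I ↔
      ∀ X ∈ slZclosure (2 * m) {X : ↥(slS (2 * m)) | ∃ t : ℂ, t ≠ 0 ∧ ∃ g : GLn (2 * m),
        X.1 = t • ((↑g : Mat (2 * m)) * D * (↑g⁻¹ : Mat (2 * m)))},
        (p : ↥(slS (2 * m)) → ℂ) X = 0 := by
  have hDD : D * D = 1 := hD ▸ diagonal_ite_one_neg_one_mul_self _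
  have htr : D.trace = 0 := hD ▸ trace_diagonal_ite_lt m
  have : Nonempty (Fin (2 * m)) := ⟨⟨0, by omega⟩⟩
  have hcone : ∀ A ∈ conjCone D, A.trace = 0 := fun A => trace_eq_zero_of_mem_conjCone htr
  have hI_map : I = (matrixVanishingIdeal (conjCone D)).map (slRestrict (2 * m)) := by
    rw [hI, matrixVanishingIdeal_conjCone hDD htr, map_slRestrict_scalarSquareIdeal]
    push_cast
    rfl
  have := isPrime_matrixVanishingIdeal_conjCone D
  refine ⟨hI_map ▸ Ideal.map_isPrime_of_surjective slRestrict_surjective (ker_slRestrict_le hcone),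
    fun p => ?_⟩
  obtain ⟨F, rfl⟩ := slRestrict_surjective p
  rw [forall_mem_slZclosure_iff, hI_map, slRestrict_mem_map_iff hcone]
  rfl
end
end

section
/- Let r ≥ 5. Realize so_{2r}(ℂ) = {X ∈ gl_{2r}(ℂ) : Xᵀ·J + J·X = 0} with J = [[0, I_r],[I_r, 0]], let SO_J(ℂ) = {g ∈ GL_{2r}(ℂ) : gᵀ·J·g = J, det g = 1}, and for X ∈ so_{2r}(ℂ) put q(X) = Σ_{i=2}^{r} X_{i,1}·X_{r+i,1}. If X ∈ so_{2r}(ℂ) is nilpotent and q(g·X·g⁻¹) = 0 for every g ∈ SO_J(ℂ), then X² = 0; moreover, if r is odd then rank X ≤ r − 1. (Thus X lies in the closure of the nilpotent orbit of partition (2^{r−1},1²) when r is odd, and in the union of the closures of the two very even nilpotent orbits of partition (2^r) when r is even.) -/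
open Matrix

noncomputable section

abbrev MatB (r : ℕ) := Matrix (Fin r ⊕ Fin r) (Fin r ⊕ Fin r) ℂ

abbrev GLB (r : ℕ) := Matrix.GeneralLinearGroup (Fin r ⊕ Fin r) ℂ

/-!
For `Y` in `so_{2r}` the form `q` is an entry of the square: `2 q(Y) = -(Y²)_{r+1,1}`, that is,
`e₁ᵀ J Y² e₁ = -2 q(Y)`. Since `SO_J` moves `e₁` to every isotropic vector `(v, w)` with `v ≠ 0`,
the vanishing of `q` on all conjugates of `X` says that the symmetric form `J X²` vanishes on all
these vectors. A symmetric form with this property is a multiple of `J`, so `X²` is a scalar, and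
nilpotency forces `X² = 0`. Hence `rank X ≤ r`; and `rank X = rank (J X)` is even because `J X` is
skew-symmetric.
-/

theorem eq_zero_of_isNilpotent_smul_one {R n : Type*} [Semiring R] [IsReduced R] [Fintype n]
    [DecidableEq n] [Nonempty n] {c : R} (hc : IsNilpotent (c • (1 : Matrix n n R))) : c = 0 := by
  rw [smul_one_eq_diagonal, ← scalar_apply, IsNilpotent.map_iff fun _ _ ↦ scalar_inj.mp] at hc
  exact hc.eq_zero

section AlternatingForms

open Module

theorem det_eq_zero_of_transpose_eq_neg_of_odd_card {R n : Type*} [CommRing R] [NoZeroDivisors R]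
    [NeZero (2 : R)] [Fintype n] [DecidableEq n] {A : Matrix n n R} (hA : Aᵀ = -A)
    (hn : Odd (Fintype.card n)) : A.det = 0 := by
  have hdet : A.det = -A.det := by
    conv_lhs => rw [← A.det_transpose, hA, det_neg, hn.neg_one_pow, neg_one_mul]
  have htwo : 2 * A.det = 0 := by linear_combination hdet
  exact (mul_eq_zero.mp htwo).resolve_left two_ne_zero

theorem disjoint_orthogonal_of_isCompl_ker {R V : Type*} [CommRing R] [AddCommGroup V]
    [Module R V] {B : LinearMap.BilinForm R V} (hB : B.IsRefl) {W : Submodule R V}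
    (hW : IsCompl W (LinearMap.ker B)) : Disjoint W (B.orthogonal W) := by
  refine Submodule.disjoint_def.mpr fun x hxW hxorth ↦ ?_
  suffices hxker : x ∈ LinearMap.ker B from Submodule.disjoint_def.mp hW.disjoint x hxW hxker
  ext y
  obtain ⟨u, hu, k, hk, rfl⟩ :=
    Submodule.mem_sup.mp (hW.sup_eq_top.ge (Submodule.mem_top (x := y)))
  have hxu : B x u = 0 := hB _ _ (hxorth u hu)
  have hxk : B x k = 0 := hB _ _ (by rw [LinearMap.mem_ker.mp hk, LinearMap.zero_apply])
  simp [hxu, hxk]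

variable {K : Type*} [Field K] [NeZero (2 : K)]

theorem even_finrank_of_isAlt_of_nondegenerate {V : Type*} [AddCommGroup V] [Module K V]
    [FiniteDimensional K V] {B : LinearMap.BilinForm K V} (hB : B.IsAlt) (hnd : B.Nondegenerate) :
    Even (finrank K V) := by
  have b := finBasis K V
  have hskew : (LinearMap.BilinForm.toMatrix b B)ᵀ = -LinearMap.BilinForm.toMatrix b B := by
    ext i j
    simp [LinearMap.BilinForm.toMatrix_apply, hB.neg_eq]
  have hdet : (LinearMap.BilinForm.toMatrix b B).det ≠ 0 :=
    (LinearMap.BilinForm.nondegenerate_iff_det_ne_zero b).mp hnd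
  by_contra hodd
  exact hdet <| det_eq_zero_of_transpose_eq_neg_of_odd_card hskew <| by
    rwa [Fintype.card_fin, ← Nat.not_even_iff_odd]

theorem even_rank_of_transpose_eq_neg {n : Type*} [Fintype n] {A : Matrix n n K} (hA : Aᵀ = -A) :
    Even A.rank := by
  classical
  have hker : LinearMap.ker (Matrix.toBilin' A) = LinearMap.ker Aᵀ.mulVecLin := by
    ext x
    simp only [LinearMap.mem_ker, mulVecLin_apply, mulVec_transpose, ← dotProduct_eq_zero_iff,
      LinearMap.ext_iff, toBilin'_apply', dotProduct_mulVec, LinearMap.zero_apply]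
  have halt : (Matrix.toBilin' A).IsAlt := fun x ↦ by
    have hx : -(x ⬝ᵥ A *ᵥ x) = x ⬝ᵥ A *ᵥ x := by
      rw [← dotProduct_neg, ← neg_mulVec, ← hA, mulVec_transpose, dotProduct_comm,
        dotProduct_mulVec]
    have htwo : 2 * (x ⬝ᵥ A *ᵥ x) = 0 := by linear_combination -hx
    rw [toBilin'_apply']
    exact (mul_eq_zero.mp htwo).resolve_left two_ne_zero
  obtain ⟨W, hW⟩ := (LinearMap.ker (Matrix.toBilin' A)).exists_isCompl
  have hrank : finrank K W = A.rank := by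
    have hdim := Submodule.finrank_add_eq_of_isCompl hW
    rw [hker, ← Aᵀ.mulVecLin.finrank_range_add_finrank_ker] at hdim
    rw [← A.rank_transpose, rank]
    omega
  rw [← hrank]
  exact even_finrank_of_isAlt_of_nondegenerate (B := (Matrix.toBilin' A).restrict W)
    (fun x ↦ halt x) <| LinearMap.BilinForm.nondegenerate_restrict_of_disjoint_orthogonal _
      halt.isRefl (disjoint_orthogonal_of_isCompl_ker halt.isRefl hW.symm)

end AlternatingForms

section QuadraticForms

variable {R n : Type*} [CommRing R] [Fintype n]

theorem eq_zero_of_isSymm_of_dotProduct_mulVec_self [NoZeroDivisors R] [NeZero (2 : R)]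
    {A : Matrix n n R} (hA : A.IsSymm) (h : ∀ v, v ⬝ᵥ A *ᵥ v = 0) : A = 0 := by
  classical
  have hdiag (i : n) : A i i = 0 := by simpa using h (Pi.single i 1)
  ext i j
  have hpolar := h (Pi.single i 1 + Pi.single j 1)
  simp only [mulVec_add, dotProduct_add, add_dotProduct, single_one_dotProduct,
    mulVec_single_one, col_apply, hA.apply, hdiag, zero_add, add_zero] at hpolar
  have htwo : 2 * A i j = 0 := by linear_combination hpolar
  exact (mul_eq_zero.mp htwo).resolve_left two_ne_zero

variable [DecidableEq n]

theorem exists_eq_smul_one_of_dotProduct_mulVec_eq_zero {A : Matrix n n R}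
    (h : ∀ v w, v ⬝ᵥ w = 0 → v ⬝ᵥ A *ᵥ w = 0) : ∃ c : R, A = c • 1 := by
  have hoff {i j : n} (hij : i ≠ j) : A i j = 0 := by
    simpa using h (Pi.single i 1) (Pi.single j 1) (by simp [hij])
  have hdiag (i j : n) : A i i = A j j := by
    obtain rfl | hij := eq_or_ne i j
    · rfl
    have hsum := h (Pi.single i 1 + Pi.single j 1) (Pi.single i 1 - Pi.single j 1)
      (by simp [hij, hij.symm])
    simp only [mulVec_sub, dotProduct_sub, add_dotProduct, single_one_dotProduct,
      mulVec_single_one, col_apply, hoff hij, hoff hij.symm] at hsum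
    linear_combination hsum
  cases isEmpty_or_nonempty n with
  | inl _ => exact ⟨0, Subsingleton.elim _ _⟩
  | inr hne =>
    obtain ⟨k⟩ := hne
    refine ⟨A k k, ext fun i j ↦ ?_⟩
    obtain rfl | hij := eq_or_ne i j
    · simp [hdiag i k]
    · simp [hoff hij, hij]

end QuadraticForms

section SpecialIsometryGroup

variable {R m : Type*} [CommRing R] [Fintype m] [DecidableEq m] {J : Matrix m m R}

/-- The special isometry group `{g | gᵀ J g = J, det g = 1}` of the bilinear form with Gram matrix
`J`; for `J = JD n R` it is the split group `SO_J`. -/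
def specialIsometryGroup (J : Matrix m m R) : Subgroup (GL m R) where
  carrier := {g | g.valᵀ * J * g.val = J ∧ g.val.det = 1}
  one_mem' := by simp
  mul_mem' := by
    rintro g h ⟨hg, hgdet⟩ ⟨hh, hhdet⟩
    refine ⟨?_, by simp [hgdet, hhdet]⟩
    calc (g * h).valᵀ * J * (g * h).val
        = h.valᵀ * (g.valᵀ * J * g.val) * h.val := by
          simp only [Units.val_mul, transpose_mul, Matrix.mul_assoc]
      _ = J := by rw [hg, hh]
  inv_mem' := by
    rintro g ⟨hg, hgdet⟩
    refine ⟨?_, by simp [hgdet]⟩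
    calc g⁻¹.valᵀ * J * g⁻¹.val
        = g⁻¹.valᵀ * (g.valᵀ * J * g.val) * g⁻¹.val := by rw [hg]
      _ = (g.val * g⁻¹.val)ᵀ * J * (g.val * g⁻¹.val) := by
          simp only [transpose_mul, Matrix.mul_assoc]
      _ = J := by rw [g.mul_inv, transpose_one, Matrix.one_mul, Matrix.mul_one]

theorem exists_mem_specialIsometryGroup_coe_eq {A : Matrix m m R} (hA : Aᵀ * J * A = J)
    (hdet : A.det = 1) : ∃ g ∈ specialIsometryGroup J, g.val = A :=
  ⟨SpecialLinearGroup.toGL ⟨A, hdet⟩, ⟨hA, hdet⟩, rfl⟩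

theorem mul_coe_inv_of_mem_specialIsometryGroup {g : GL m R} (hg : g ∈ specialIsometryGroup J) :
    J * g⁻¹.val = g.valᵀ * J := by
  conv_lhs => rw [← hg.1, Matrix.mul_assoc, g.mul_inv, Matrix.mul_one]

theorem isSkewAdjoint_conj {g : GL m R} (hg : g ∈ specialIsometryGroup J) {X : Matrix m m R}
    (hX : J.IsSkewAdjoint X) : J.IsSkewAdjoint (g.val * X * g⁻¹.val) := by
  have hinv : J * g.val = g⁻¹.valᵀ * J := by
    simpa using mul_coe_inv_of_mem_specialIsometryGroup (inv_mem hg)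
  calc (g.val * X * g⁻¹.val)ᵀ * J
      = g⁻¹.valᵀ * (Xᵀ * (g.valᵀ * J)) := by simp only [transpose_mul, Matrix.mul_assoc]
    _ = g⁻¹.valᵀ * (Xᵀ * J) * g⁻¹.val := by
        rw [← mul_coe_inv_of_mem_specialIsometryGroup hg]
        simp only [Matrix.mul_assoc]
    _ = (g⁻¹.valᵀ * J) * -X * g⁻¹.val := by
        rw [show Xᵀ * J = J * -X from hX]
        simp only [Matrix.mul_assoc]
    _ = J * -(g.val * X * g⁻¹.val) := by
        rw [← hinv]
        simp only [Matrix.mul_assoc, Matrix.mul_neg, Matrix.neg_mul]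

theorem mulVec_dotProduct_mul_mulVec_mulVec {g : GL m R} (hg : g ∈ specialIsometryGroup J)
    (A : Matrix m m R) (u : m → R) :
    (g.val *ᵥ u) ⬝ᵥ (J * A) *ᵥ (g.val *ᵥ u) = u ⬝ᵥ (J * (g⁻¹.val * A * g.val)) *ᵥ u := by
  have hmat : J * (g⁻¹.val * A * g.val) = g.valᵀ * (J * A) * g.val := by
    rw [← Matrix.mul_assoc, ← Matrix.mul_assoc, mul_coe_inv_of_mem_specialIsometryGroup hg]
    simp only [Matrix.mul_assoc]
  rw [hmat, ← mulVec_mulVec u, ← mulVec_mulVec _ g.valᵀ, dotProduct_mulVec u, vecMul_transpose]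

end SpecialIsometryGroup

section SkewAdjoint

variable {R m : Type*} [CommRing R] [Fintype m] {J X : Matrix m m R}

theorem transpose_mul_eq_neg_of_isSkewAdjoint (hJ : J.IsSymm) (hX : J.IsSkewAdjoint X) :
    (J * X)ᵀ = -(J * X) := by
  rw [transpose_mul, hJ.eq, ← Matrix.mul_neg]
  exact hX

theorem isSymm_mul_mul_self_of_isSkewAdjoint (hJ : J.IsSymm) (hX : J.IsSkewAdjoint X) :
    (J * (X * X)).IsSymm := by
  have hX' : Xᵀ * J = J * -X := hX
  calc (J * (X * X))ᵀ = Xᵀ * (Xᵀ * J) := by simp only [transpose_mul, hJ.eq, Matrix.mul_assoc]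
    _ = Xᵀ * J * -X := by rw [Matrix.mul_assoc, ← hX']
    _ = J * (X * X) := by rw [hX', Matrix.mul_assoc, neg_mul_neg]

theorem even_rank_of_isSkewAdjoint {K : Type*} [Field K] [NeZero (2 : K)] [DecidableEq m]
    {J X : Matrix m m K} (hJ : J.IsSymm) (hJdet : IsUnit J.det) (hX : J.IsSkewAdjoint X) :
    Even X.rank := by
  rw [← rank_mul_eq_right_of_isUnit_det J X hJdet]
  exact even_rank_of_transpose_eq_neg (transpose_mul_eq_neg_of_isSkewAdjoint hJ hX)

end SkewAdjoint

section SplitForm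

open LieAlgebra.Orthogonal (JD)

variable {R n : Type*} [CommRing R] [DecidableEq n]

theorem JD_isSymm : (JD n R).IsSymm := by
  simp [JD, IsSymm, fromBlocks_transpose]

variable [Fintype n]

theorem JD_mul_self : JD n R * JD n R = 1 := by
  simp [JD, fromBlocks_multiply]

theorem JD_mul_apply_inl {m : Type*} (A : Matrix (n ⊕ n) m R) (i : n) (k : m) :
    (JD n R * A) (.inl i) k = A (.inr i) k := by
  simp [JD, Matrix.mul_apply, one_apply]

theorem isUnit_det_JD : IsUnit (JD n R).det :=
  isUnit_det_of_left_inverse JD_mul_self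

theorem exists_eq_smul_JD_of_dotProduct_mulVec_self [IsDomain R] [NeZero (2 : R)] [Nontrivial n]
    {S : Matrix (n ⊕ n) (n ⊕ n) R} (hS : S.IsSymm)
    (h : ∀ v w : n → R, v ≠ 0 → v ⬝ᵥ w = 0 → Sum.elim v w ⬝ᵥ S *ᵥ Sum.elim v w = 0) :
    ∃ c : R, S = c • JD n R := by
  obtain ⟨A, B, C, D, rfl⟩ : ∃ A B C D, S = fromBlocks A B C D :=
    ⟨_, _, _, _, S.fromBlocks_toBlocks.symm⟩
  obtain ⟨hA, hBC, -, hD⟩ := isSymm_fromBlocks_iff.mp hS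
  subst hBC
  have hform (v w : n → R) (hv : v ≠ 0) (hvw : v ⬝ᵥ w = 0) :
      v ⬝ᵥ A *ᵥ v + 2 * (v ⬝ᵥ B *ᵥ w) + w ⬝ᵥ D *ᵥ w = 0 := by
    have hvw' := h v w hv hvw
    simp only [fromBlocks_mulVec, Sum.elim_comp_inl, Sum.elim_comp_inr,
      sumElim_dotProduct_sumElim, dotProduct_add, mulVec_transpose, dotProduct_comm w (v ᵥ* B),
      ← dotProduct_mulVec] at hvw'
    linear_combination hvw'
  have hAzero : A = 0 := eq_zero_of_isSymm_of_dotProduct_mulVec_self hA fun v ↦ by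
    obtain rfl | hv := eq_or_ne v 0
    · simp
    · simpa using hform v 0 hv (by simp)
  have hDiso (v w : n → R) (hv : v ≠ 0) (hvw : v ⬝ᵥ w = 0) : w ⬝ᵥ D *ᵥ w = 0 := by
    have hpos := hform v w hv hvw
    have hneg := hform v (-w) hv (by simp [hvw])
    simp only [hAzero, zero_mulVec, dotProduct_zero, mulVec_neg, dotProduct_neg,
      neg_dotProduct] at hpos hneg
    have htwo : 2 * (w ⬝ᵥ D *ᵥ w) = 0 := by linear_combination hpos + hneg
    exact (mul_eq_zero.mp htwo).resolve_left two_ne_zero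
  have hDzero : D = 0 := eq_zero_of_isSymm_of_dotProduct_mulVec_self hD fun w ↦ by
    obtain ⟨v, hv, hvw⟩ := exists_ne_zero_dotProduct_eq_zero w
    exact hDiso v w hv hvw
  obtain ⟨c, rfl⟩ : ∃ c : R, B = c • 1 :=
    exists_eq_smul_one_of_dotProduct_mulVec_eq_zero fun v w hvw ↦ by
      obtain rfl | hv := eq_or_ne v 0
      · simp
      · have hB := hform v w hv hvw
        simpa [hAzero, hDzero, two_ne_zero] using hB
  exact ⟨c, by simp [hAzero, hDzero, JD, fromBlocks_smul]⟩

theorem exists_mem_specialIsometryGroup_JD_of_GL (P : GL n R) :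
    ∃ g ∈ specialIsometryGroup (JD n R), ∀ v w : n → R,
      g.val *ᵥ Sum.elim v w = Sum.elim (P.val *ᵥ v) (P⁻¹.valᵀ *ᵥ w) := by
  have hPt : P.valᵀ * P⁻¹.valᵀ = 1 := by
    rw [← transpose_mul, P.inv_mul, transpose_one]
  obtain ⟨g, hg, hgP⟩ := exists_mem_specialIsometryGroup_coe_eq (J := JD n R)
    (A := fromBlocks P.val 0 0 P⁻¹.valᵀ)
    (by simp [JD, fromBlocks_transpose, fromBlocks_multiply, hPt, -coe_units_inv])
    (by rw [det_fromBlocks_zero₂₁, ← P.val.det_transpose, ← det_mul, hPt, det_one])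
  exact ⟨g, hg, fun v w ↦ by simp [hgP, fromBlocks_mulVec]⟩

theorem exists_mem_specialIsometryGroup_JD_of_transpose_eq_neg {N : Matrix n n R} (hN : Nᵀ = -N) :
    ∃ g ∈ specialIsometryGroup (JD n R), ∀ v w : n → R,
      g.val *ᵥ Sum.elim v w = Sum.elim v (N *ᵥ v + w) := by
  obtain ⟨g, hg, hgN⟩ := exists_mem_specialIsometryGroup_coe_eq (J := JD n R)
    (A := fromBlocks 1 0 N 1)
    (by simp [JD, fromBlocks_transpose, fromBlocks_multiply, hN])
    (by simp)
  exact ⟨g, hg, fun v w ↦ by simp [hgN, fromBlocks_mulVec]⟩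

/-- The quadratic form `q(X) = ∑ i ≥ 2, X_{i,1} X_{r+i,1}`: indices `1, …, r` are `inl i`, indices
`r+1, …, 2r` are `inr i`, and `z : n` plays the role of the index `1`. -/
def firstColumnForm (z : n) (X : Matrix (n ⊕ n) (n ⊕ n) R) : R :=
  ∑ i with i ≠ z, X (.inl i) (.inl z) * X (.inr i) (.inl z)

theorem two_mul_firstColumnForm (z : n) {X : Matrix (n ⊕ n) (n ⊕ n) R}
    (hX : (JD n R).IsSkewAdjoint X) :
    2 * firstColumnForm z X = -(X * X) (.inr z) (.inl z) := by
  have hinl (i : n) : X (.inr z) (.inl i) = -X (.inr i) (.inl z) := by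
    simpa [JD, Matrix.mul_apply, one_apply, eq_comm] using congrFun₂ hX (.inl i) (.inl z)
  have hinr (i : n) : X (.inr z) (.inr i) = -X (.inl i) (.inl z) := by
    simpa [JD, Matrix.mul_apply, one_apply, eq_comm] using congrFun₂ hX (.inr i) (.inl z)
  have hz : 2 * X (.inr z) (.inl z) = 0 := by linear_combination hinl z
  have hsum : (X * X) (.inr z) (.inl z) =
      -2 * ∑ i, X (.inl i) (.inl z) * X (.inr i) (.inl z) := by
    rw [Matrix.mul_apply, Fintype.sum_sum_type, ← Finset.sum_add_distrib, Finset.mul_sum]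
    refine Finset.sum_congr rfl fun i _ ↦ ?_
    rw [hinl, hinr]
    ring
  rw [hsum, firstColumnForm, Finset.filter_ne', Finset.sum_erase_eq_sub (Finset.mem_univ z)]
  linear_combination -X (.inl z) (.inl z) * hz

end SplitForm

section Transitivity

open LieAlgebra.Orthogonal (JD)

theorem exists_linearEquiv_apply_eq {K V : Type*} [DivisionRing K] [AddCommGroup V] [Module K V]
    {x y : V} (hx : x ≠ 0) (hy : y ≠ 0) : ∃ e : V ≃ₗ[K] V, e x = y := by
  obtain ⟨e, he⟩ := Submodule.exists_linearEquiv_restrict_eq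
    ((LinearEquiv.toSpanNonzeroSingleton K V x hx).symm ≪≫ₗ
      LinearEquiv.toSpanNonzeroSingleton K V y hy)
  refine ⟨e, ?_⟩
  rw [← he ⟨x, Submodule.mem_span_singleton_self x⟩,
    LinearEquiv.trans_apply, ← LinearEquiv.toSpanNonzeroSingleton_one K V x hx,
    LinearEquiv.symm_apply_apply, LinearEquiv.toSpanNonzeroSingleton_one]

variable {K n : Type*} [Field K] [Fintype n]

theorem exists_transpose_eq_neg_mulVec_eq {v w : n → K} (hv : v ≠ 0) (hvw : v ⬝ᵥ w = 0) :
    ∃ N : Matrix n n K, Nᵀ = -N ∧ N *ᵥ v = w := by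
  classical
  obtain ⟨i, hi⟩ := Function.ne_iff.mp hv
  have hu : Pi.single i (v i)⁻¹ ⬝ᵥ v = 1 := by simpa using inv_mul_cancel₀ hi
  refine ⟨vecMulVec w (Pi.single i (v i)⁻¹) - vecMulVec (Pi.single i (v i)⁻¹) w, ?_, ?_⟩
  · rw [transpose_sub, transpose_vecMulVec, transpose_vecMulVec, neg_sub]
  · simp [sub_mulVec, vecMulVec_mulVec, hu, dotProduct_comm w v, hvw]

variable [DecidableEq n]

theorem exists_GL_mulVec_eq {v w : n → K} (hv : v ≠ 0) (hw : w ≠ 0) :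
    ∃ P : GL n K, P.val *ᵥ v = w := by
  obtain ⟨e, he⟩ := exists_linearEquiv_apply_eq (K := K) hv hw
  refine ⟨GeneralLinearGroup.toLin.symm (.ofLinearEquiv e), ?_⟩
  rw [← mulVecLin_apply, ← GeneralLinearGroup.toLin_apply, MulEquiv.apply_symm_apply]
  exact he

theorem exists_mem_specialIsometryGroup_mulVec_single_eq (z : n) {v w : n → K} (hv : v ≠ 0)
    (hvw : v ⬝ᵥ w = 0) :
    ∃ g ∈ specialIsometryGroup (JD n K), g.val *ᵥ Pi.single (.inl z) 1 = Sum.elim v w := by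
  have he : (Pi.single z 1 : n → K) ≠ 0 := Pi.single_ne_zero_iff.mpr one_ne_zero
  obtain ⟨P, hP⟩ := exists_GL_mulVec_eq he hv
  obtain ⟨N, hN, hNv⟩ := exists_transpose_eq_neg_mulVec_eq hv hvw
  obtain ⟨g, hg, hgP⟩ := exists_mem_specialIsometryGroup_JD_of_GL P
  obtain ⟨h, hh, hhN⟩ := exists_mem_specialIsometryGroup_JD_of_transpose_eq_neg hN
  refine ⟨h * g, mul_mem hh hg, ?_⟩
  rw [Units.val_mul, ← mulVec_mulVec, ← Sum.elim_single_zero, hgP, hP, hhN, hNv,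
    mulVec_zero, add_zero]

end Transitivity

section Vanishing

open LieAlgebra.Orthogonal (JD)

variable {K n : Type*} [Field K] [Fintype n] [DecidableEq n]

theorem dotProduct_JD_mul_mul_self_mulVec_eq_zero {z : n} {X : Matrix (n ⊕ n) (n ⊕ n) K}
    (hX : (JD n K).IsSkewAdjoint X)
    (hvanish : ∀ g ∈ specialIsometryGroup (JD n K), firstColumnForm z (g.val * X * g⁻¹.val) = 0)
    {v w : n → K} (hv : v ≠ 0) (hvw : v ⬝ᵥ w = 0) :
    Sum.elim v w ⬝ᵥ (JD n K * (X * X)) *ᵥ Sum.elim v w = 0 := by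
  obtain ⟨h, hh, hhz⟩ := exists_mem_specialIsometryGroup_mulVec_single_eq z hv hvw
  have hYskew := isSkewAdjoint_conj (inv_mem hh) hX
  have hYcol := hvanish h⁻¹ (inv_mem hh)
  rw [inv_inv] at hYskew hYcol
  have hsq : h⁻¹.val * (X * X) * h.val = (h⁻¹.val * X * h.val) * (h⁻¹.val * X * h.val) := by
    simp only [mul_assoc, Units.mul_inv_cancel_left]
  have hentry : (h⁻¹.val * (X * X) * h.val) (.inr z) (.inl z) = 0 := by
    rw [hsq, ← neg_eq_zero, ← two_mul_firstColumnForm z hYskew, hYcol, mul_zero]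
  rw [← hhz, mulVec_dotProduct_mul_mulVec_mulVec hh]
  simpa [JD_mul_apply_inl] using hentry

theorem exists_mul_self_eq_smul_one [NeZero (2 : K)] [Nontrivial n] {z : n}
    {X : Matrix (n ⊕ n) (n ⊕ n) K} (hX : (JD n K).IsSkewAdjoint X)
    (hvanish : ∀ g ∈ specialIsometryGroup (JD n K), firstColumnForm z (g.val * X * g⁻¹.val) = 0) :
    ∃ c : K, X * X = c • 1 := by
  obtain ⟨c, hc⟩ := exists_eq_smul_JD_of_dotProduct_mulVec_self
    (isSymm_mul_mul_self_of_isSkewAdjoint JD_isSymm hX)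
    fun _ _ ↦ dotProduct_JD_mul_mul_self_mulVec_eq_zero hX hvanish
  refine ⟨c, ?_⟩
  calc X * X
    _ = JD n K * (JD n K * (X * X)) := by rw [← Matrix.mul_assoc, JD_mul_self, Matrix.one_mul]
    _ = c • 1 := by rw [hc, Matrix.mul_smul, JD_mul_self]

theorem stmt_16_general [NeZero (2 : K)] [Nontrivial n] (z : n)
    {X : Matrix (n ⊕ n) (n ⊕ n) K} (hX : (JD n K).IsSkewAdjoint X) (hXnil : IsNilpotent X)
    (hvanish : ∀ g ∈ specialIsometryGroup (JD n K), firstColumnForm z (g.val * X * g⁻¹.val) = 0) :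
    X * X = 0 ∧ (Odd (Fintype.card n) → X.rank ≤ Fintype.card n - 1) := by
  obtain ⟨c, hc⟩ := exists_mul_self_eq_smul_one hX hvanish
  have hcnil : IsNilpotent (c • (1 : Matrix (n ⊕ n) (n ⊕ n) K)) :=
    hc ▸ (Commute.refl X).isNilpotent_mul_left hXnil
  have hsq : X * X = 0 := by rw [hc, eq_zero_of_isNilpotent_smul_one hcnil, zero_smul]
  refine ⟨hsq, fun hodd ↦ ?_⟩
  have hrank := rank_add_rank_le_card_of_mul_eq_zero hsq
  rw [Fintype.card_sum] at hrank
  have heven := even_rank_of_isSkewAdjoint JD_isSymm isUnit_det_JD hX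
  have hne : X.rank ≠ Fintype.card n := fun h ↦ Nat.not_even_iff_odd.mpr hodd (h ▸ heven)
  omega

end Vanishing

theorem stmt_16 (r : ℕ) (hr : 5 ≤ r)
    (J : MatB r) (hJ : J = Matrix.fromBlocks 0 1 1 0)
    -- `so_{2r}(ℂ) = {X : Xᵀ·J + J·X = 0}`
    (so : Set (MatB r)) (hso : so = {X | Xᵀ * J + J * X = 0})
    -- `SO_J(ℂ)`
    (SOJ : Set (GLB r))
    (hSOJ : SOJ = {g : GLB r | (↑g : MatB r)ᵀ * J * (↑g : MatB r) = J ∧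
      (↑g : MatB r).det = 1})
    -- `q(X) = Σ_{i=2}^r X_{i,1}·X_{r+i,1}`
    (q : MatB r → ℂ)
    (hq : q = fun X => ∑ i : Fin r, if (i : ℕ) = 0 then 0 else
      X (Sum.inl i) (Sum.inl ⟨0, by omega⟩) * X (Sum.inr i) (Sum.inl ⟨0, by omega⟩))
    (X : MatB r) (hX : X ∈ so) (hXnil : IsNilpotent X)
    (hvanish : ∀ g ∈ SOJ, q ((↑g : MatB r) * X * (↑g⁻¹ : MatB r)) = 0) :
    X * X = 0 ∧ (Odd r → X.rank ≤ r - 1) := by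
  subst hJ hso hSOJ hq
  have : Nontrivial (Fin r) := Fin.nontrivial_iff_two_le.mpr (by omega)
  have hskew : (LieAlgebra.Orthogonal.JD (Fin r) ℂ).IsSkewAdjoint X :=
    (eq_neg_of_add_eq_zero_left hX).trans (Matrix.mul_neg _ _).symm
  have h := stmt_16_general (⟨0, by omega⟩ : Fin r) hskew hXnil fun g hg ↦ by
    simpa only [firstColumnForm, Finset.sum_filter, ite_not, ne_eq, Fin.ext_iff] using hvanish g hg
  rwa [Fintype.card_fin] at h
end
end
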